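/- For every real number η > 1 there exists a constant C > 0, depending only on n, p, α, η, C₁ and C₂, with the following property: if u is a nonnegative C¹ solution of div A(x,Du) + b(x)|Du|^α ≥ q(x)g(u) in ℝⁿ, and τ > 1 and 0 < r₁ < r₂ are real numbers with r₂ ≤ τ·r₁ and 0 < M(r₁;u) ≤ η^{−1/2}·M(r₂;u), then at least one of the following two inequalities holds: (i) ∫_{M(r₁;u)}^{M(r₂;u)} (g_η(t)·t)^{−1/p} dt ≥ C·∫_{r₁}^{r₂} q_τ(ξ)^{1/p} dξ; (ii) ∫_{M(r₁;u)}^{M(r₂;u)} g_η(t)^{−1/α} dt ≥ C·∫_{r₁}^{r₂} (ξ·f_τ(ξ))^{1/(p−1)} dξ. -/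

import Mathlib

open MeasureTheory Metric Set Filter
open scoped RealInnerProductSpace ENNReal

noncomputable section

abbrev Euc (n : ℕ) := EuclideanSpace ℝ (Fin n)

/-- Weak solution of `div A(x,Dv) + b(x)|Dv|^α ≥ a(x)` on an open set `U`:
for every nonnegative test function `φ ∈ C₀^∞(U)`,
`-∫ A(x,Dv)·Dφ + ∫ b |Dv|^α φ ≥ ∫ a φ`. -/
def IsWeakSol {n : ℕ} (A : Euc n → Euc n → Euc n) (b : Euc n → ℝ) (α : ℝ)
    (a : Euc n → ℝ) (U : Set (Euc n)) (v : Euc n → ℝ) : Prop :=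
  ∀ φ : Euc n → ℝ, ContDiff ℝ (⊤ : ℕ∞) φ → HasCompactSupport φ → tsupport φ ⊆ U →
    (∀ x, 0 ≤ φ x) →
    (∫ x in U, a x * φ x) ≤
      (-(∫ x in U, ⟪A x (gradient v x), gradient φ x⟫)) +
        ∫ x in U, b x * ‖gradient v x‖ ^ α * φ x

/-- Structural conditions on `A`: measurability, coercivity and growth. -/
def StructCond {n : ℕ} (A : Euc n → Euc n → Euc n) (p C₁ C₂ : ℝ) : Prop :=
  Measurable (Function.uncurry A) ∧
    ∀ x ζ : Euc n, C₁ * ‖ζ‖ ^ p ≤ ⟪ζ, A x ζ⟫ ∧ ‖A x ζ‖ ≤ C₂ * ‖ζ‖ ^ (p - 1)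

/-- Locally bounded function on `ℝⁿ`. -/
def LocBdd {n : ℕ} (b : Euc n → ℝ) : Prop :=
  ∀ K : Set (Euc n), IsCompact K → ∃ C, ∀ x ∈ K, b x ≤ C

/-- `M(r; u) = max_{|x| = r} u x`. -/
def sphMax {n : ℕ} (u : Euc n → ℝ) (r : ℝ) : ℝ := sSup (u '' Metric.sphere (0 : Euc n) r)

/-- `g_θ(t) = inf_{s ∈ (t/θ, θ t)} g s`. -/
def ginf (g : ℝ → ℝ) (θ t : ℝ) : ℝ := sInf (g '' Set.Ioo (t / θ) (θ * t))

/-- The open annulus `{x : r₁ < |x| < r₂}`. -/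
def Ann (n : ℕ) (r₁ r₂ : ℝ) : Set (Euc n) := {x : Euc n | r₁ < ‖x‖ ∧ ‖x‖ < r₂}

/-- `q_σ(r) = ess inf_{r/σ < |x| < σ r} q x`. -/
def qinf {n : ℕ} (q : Euc n → ℝ) (σ r : ℝ) : ℝ :=
  essInf q (volume.restrict (Ann n (r / σ) (σ * r)))

/-- `f_σ(r) = q_σ(r) / (1 + r q_σ(r)^{(α-p+1)/α} ess sup_{r/σ<|x|<σr} b^{(p-1)/α})`. -/
def fdef {n : ℕ} (q b : Euc n → ℝ) (p α σ r : ℝ) : ℝ :=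
  qinf q σ r /
    (1 + r * qinf q σ r ^ ((α - p + 1) / α) *
      essSup (fun x => b x ^ ((p - 1) / α)) (volume.restrict (Ann n (r / σ) (σ * r))))

/-!
On a ball where `q ≥ Q` and `b ≤ B`, testing the inequality with the squared excess of `u` over a
paraboloid and iterating in the manner of De Giorgi shows that a source bounded below forces `u` to
grow. Applied at a maximum point on a sphere, with the maximum principle making `r ↦ M(r)`
monotone, this gives for `s < t` with `V = (M(t) - M(s)) / (t - s)` the bound
`Q g ≤ K (V ^ (p - 1) / (t - s) + B V ^ α)` for the least value of `g` near `M(s)`. A step on which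
`M` grows by a factor between `L` and `L²`, where `L⁴ < η`, therefore has width at most
`K ∫ (Q ^ (-1/p) (t g_η) ^ (-1/p) + (B/Q) ^ (1/α) g_η ^ (-1/α)) dt` over the range of `M`. Summing
over consecutive steps bounds `r₂ - r₁` by a sum of two terms, and the larger one decides which
alternative holds.
-/

open scoped Gradient Convolution Topology

section StampacchiaIteration

variable {a : ℝ → ℝ} {t₀ d C l γ : ℝ}

lemma stampacchia_halving_step {x : ℝ} (hx : 0 ≤ x) (hd : 0 < d) (hγ : 1 < γ)
    (hsmall : C * x ^ (γ - 1) * 2 ^ (l * γ / (γ - 1)) ≤ d ^ l) (j : ℝ) :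
    C * (d * 2 ^ (-(j + 1))) ^ (-l) * (x * 2 ^ (-(l / (γ - 1)) * j)) ^ γ ≤
      x * 2 ^ (-(l / (γ - 1)) * (j + 1)) := by
  have hγ' : γ - 1 ≠ 0 := by linarith
  have hx_pow : x ^ γ = x * x ^ (γ - 1) := by
    rw [← Real.rpow_one_add' hx (by linarith), add_sub_cancel]
  have hexp : (2 : ℝ) ^ (-(j + 1) * -l) * 2 ^ (-(l / (γ - 1)) * j * γ) =
      2 ^ (l * γ / (γ - 1)) * 2 ^ (-(l / (γ - 1)) * (j + 1)) := by
    rw [← Real.rpow_add two_pos, ← Real.rpow_add two_pos]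
    congr 1
    field_simp
    ring
  calc C * (d * 2 ^ (-(j + 1))) ^ (-l) * (x * 2 ^ (-(l / (γ - 1)) * j)) ^ γ
      = C * x ^ (γ - 1) * d ^ (-l) * x *
          (2 ^ (-(j + 1) * -l) * 2 ^ (-(l / (γ - 1)) * j * γ)) := by
        rw [Real.mul_rpow hd.le (by positivity), Real.mul_rpow hx (by positivity),
          ← Real.rpow_mul zero_le_two, ← Real.rpow_mul zero_le_two, hx_pow]
        ring
    _ = C * x ^ (γ - 1) * 2 ^ (l * γ / (γ - 1)) *
          (d ^ (-l) * (x * 2 ^ (-(l / (γ - 1)) * (j + 1)))) := by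
        rw [hexp]
        ring
    _ ≤ d ^ l * (d ^ (-l) * (x * 2 ^ (-(l / (γ - 1)) * (j + 1)))) := by gcongr
    _ = x * 2 ^ (-(l / (γ - 1)) * (j + 1)) := by
        rw [← mul_assoc, ← Real.rpow_add hd, add_neg_cancel, Real.rpow_zero, one_mul]

lemma stampacchia_le_geometric (ha : ∀ t, 0 ≤ a t) (hd : 0 < d) (hC : 0 ≤ C) (hγ : 1 < γ)
    (hrec : ∀ t s, t₀ ≤ t → t < s → a s ≤ C * (s - t) ^ (-l) * a t ^ γ)
    (hsmall : C * a t₀ ^ (γ - 1) * 2 ^ (l * γ / (γ - 1)) ≤ d ^ l) (j : ℕ) :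
    a (t₀ + d * (1 - 2 ^ (-(j : ℝ)))) ≤ a t₀ * 2 ^ (-(l / (γ - 1)) * j) := by
  induction j with
  | zero => simp
  | succ j ih =>
    have hpow_le : (2 : ℝ) ^ (-(j : ℝ)) ≤ 1 :=
      Real.rpow_le_one_of_one_le_of_nonpos one_le_two (by simp)
    have hstep : t₀ + d * (1 - 2 ^ (-((j : ℝ) + 1))) - (t₀ + d * (1 - 2 ^ (-(j : ℝ)))) =
        d * 2 ^ (-((j : ℝ) + 1)) := by
      rw [neg_add, Real.rpow_add two_pos, Real.rpow_neg_one]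
      ring
    have hstep_pos : 0 < d * (2 : ℝ) ^ (-((j : ℝ) + 1)) := by positivity
    push_cast
    calc a (t₀ + d * (1 - 2 ^ (-((j : ℝ) + 1))))
        ≤ C * (d * 2 ^ (-((j : ℝ) + 1))) ^ (-l) * a (t₀ + d * (1 - 2 ^ (-(j : ℝ)))) ^ γ := by
          rw [← hstep]
          refine hrec _ _ (le_add_of_nonneg_right ?_) (by linarith)
          exact mul_nonneg hd.le (sub_nonneg.2 hpow_le)
      _ ≤ C * (d * 2 ^ (-((j : ℝ) + 1))) ^ (-l) * (a t₀ * 2 ^ (-(l / (γ - 1)) * j)) ^ γ := by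
          gcongr
          exact ha _
      _ ≤ a t₀ * 2 ^ (-(l / (γ - 1)) * ((j : ℝ) + 1)) :=
          stampacchia_halving_step (ha t₀) hd hγ hsmall j

theorem stampacchia_eq_zero (ha : ∀ t, 0 ≤ a t) (hanti : AntitoneOn a (Ici t₀)) (hd : 0 < d)
    (hC : 0 ≤ C) (hγ : 1 < γ) (hl : 0 < l)
    (hrec : ∀ t s, t₀ ≤ t → t < s → a s ≤ C * (s - t) ^ (-l) * a t ^ γ)
    (hsmall : C * a t₀ ^ (γ - 1) * 2 ^ (l * γ / (γ - 1)) ≤ d ^ l) :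
    a (t₀ + d) = 0 := by
  set θ : ℝ := 2 ^ (-(l / (γ - 1))) with hθ
  have hθ_lt : θ < 1 := Real.rpow_lt_one_of_one_lt_of_neg one_lt_two
    (neg_neg_of_pos (div_pos hl (sub_pos.2 hγ)))
  have hbound (j : ℕ) : a (t₀ + d) ≤ a t₀ * θ ^ j := by
    have hpow_pos : (0 : ℝ) < 2 ^ (-(j : ℝ)) := by positivity
    have hpow_le : (2 : ℝ) ^ (-(j : ℝ)) ≤ 1 :=
      Real.rpow_le_one_of_one_le_of_nonpos one_le_two (by simp)
    rw [hθ, ← Real.rpow_mul_natCast zero_le_two]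
    refine (hanti ?_ ?_ ?_).trans (stampacchia_le_geometric ha hd hC hγ hrec hsmall j)
    · exact le_add_of_nonneg_right (mul_nonneg hd.le (sub_nonneg.2 hpow_le))
    · exact le_add_of_nonneg_right hd.le
    · gcongr
      nlinarith
  have hlim : Tendsto (fun j : ℕ ↦ a t₀ * θ ^ j) atTop (nhds 0) := by
    simpa using (tendsto_pow_atTop_nhds_zero_of_lt_one (by positivity) hθ_lt).const_mul (a t₀)
  exact le_antisymm (ge_of_tendsto' hlim hbound) (ha _)

end StampacchiaIteration

section DeGiorgi

variable {E : Type*} [NormedAddCommGroup E] [InnerProductSpace ℝ E] [FiniteDimensional ℝ E]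
  [MeasurableSpace E] [BorelSpace E]

lemma integral_norm_rpow_le_integral_norm_fderiv_rpow {F : Type*} [NormedAddCommGroup F]
    [NormedSpace ℝ F] (μ : Measure E) [μ.IsAddHaarMeasure] {f : E → F} (hf : ContDiff ℝ 1 f)
    (hf_supp : HasCompactSupport f) {γ : ℝ}
    (hγ : (Module.finrank ℝ E : ℝ).HolderConjugate γ) :
    ∫ x, ‖f x‖ ^ γ ∂μ ≤
      lintegralPowLePowLIntegralFDerivConst μ γ * (∫ x, ‖fderiv ℝ f x‖ ∂μ) ^ γ := by
  have hγ0 : 0 < γ := hγ.symm.pos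
  have hrpow_int : Integrable (fun x ↦ ‖f x‖ ^ γ) μ :=
    (hf.continuous.norm.rpow_const fun _ ↦ Or.inr hγ0.le).integrable_of_hasCompactSupport
      (hf_supp.comp_left (g := fun y ↦ ‖y‖ ^ γ) (by simp [hγ0.ne']))
  have hfderiv_int : Integrable (fun x ↦ ‖fderiv ℝ f x‖) μ :=
    (hf.continuous_fderiv one_ne_zero).norm.integrable_of_hasCompactSupport
      (hf_supp.fderiv ℝ).norm
  have hlint := lintegral_pow_le_pow_lintegral_fderiv μ hf hf_supp hγ
  simp only [← ofReal_norm, ENNReal.ofReal_rpow_of_nonneg (norm_nonneg _) hγ0.le] at hlint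
  rwa [← ofReal_integral_eq_lintegral_ofReal hrpow_int (.of_forall fun _ ↦ by positivity),
    ← ofReal_integral_eq_lintegral_ofReal hfderiv_int (.of_forall fun _ ↦ norm_nonneg _),
    ENNReal.ofReal_rpow_of_nonneg (by positivity) hγ0.le, ← ENNReal.ofReal_coe_nnreal,
    ← ENNReal.ofReal_mul (by positivity), ENNReal.ofReal_le_ofReal_iff (by positivity)] at hlint

lemma posPart_sub_le_rpow_mul_rpow {y s t κ : ℝ} (hts : t < s) (hκ : 1 ≤ κ) :
    (y - s)⁺ ≤ (s - t) ^ (1 - κ) * (y - t)⁺ ^ κ := by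
  have hst : 0 < s - t := sub_pos.2 hts
  rcases le_total y s with hy | hy
  · rw [posPart_of_nonpos (sub_nonpos.2 hy)]
    positivity
  have hyt : s - t ≤ y - t := by linarith
  have hpos : 0 < y - t := hst.trans_le hyt
  rw [posPart_of_nonneg (sub_nonneg.2 hy), posPart_of_nonneg hpos.le]
  calc y - s ≤ y - t := by linarith
    _ = (y - t) ^ (1 - κ) * (y - t) ^ κ := by
        rw [← Real.rpow_add hpos, sub_add_cancel, Real.rpow_one]
    _ ≤ (s - t) ^ (1 - κ) * (y - t) ^ κ := by
        gcongr ?_ * _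
        exact Real.rpow_le_rpow_of_nonpos hst hyt (by linarith)

lemma hasCompactSupport_posPart_sub {X : Type*} [TopologicalSpace X] {w : X → ℝ}
    (hw : HasCompactSupport w) {t : ℝ} (ht : 0 ≤ t) : HasCompactSupport fun x ↦ (w x - t)⁺ :=
  hw.comp_left (g := fun y ↦ (y - t)⁺) (by simpa using ht)

variable {w : E → ℝ} {S : Set E} {Λ t₀ d γ : ℝ}

lemma integrable_posPart_sub (hw : Continuous w) (hw_supp : HasCompactSupport w) {t : ℝ}
    (ht : 0 ≤ t) : Integrable fun x ↦ (w x - t)⁺ :=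
  (by fun_prop : Continuous fun x ↦ (w x - t)⁺).integrable_of_hasCompactSupport
    (hasCompactSupport_posPart_sub hw_supp ht)

lemma integrable_posPart_sub_rpow (hw : Continuous w) (hw_supp : HasCompactSupport w) {t κ : ℝ}
    (ht : 0 ≤ t) (hκ : 0 < κ) : Integrable fun x ↦ (w x - t)⁺ ^ κ :=
  ((by fun_prop : Continuous fun x ↦ (w x - t)⁺).rpow_const fun _ ↦ Or.inr hκ.le)
    |>.integrable_of_hasCompactSupport
      ((hasCompactSupport_posPart_sub hw_supp ht).comp_left (g := fun y ↦ y ^ κ)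
        (Real.zero_rpow hκ.ne'))

lemma integral_posPart_sub_rpow_le (hw_supp : HasCompactSupport w) {t : ℝ} (ht : 0 ≤ t)
    (hγ : (Module.finrank ℝ E : ℝ).HolderConjugate γ) (hΛ : 0 ≤ Λ)
    (hdiff : ContDiff ℝ 1 fun x ↦ (w x - t)⁺ ^ 2)
    (henergy : ∫ x, ‖fderiv ℝ (fun x ↦ (w x - t)⁺ ^ 2) x‖ ≤ Λ * ∫ x in S, (w x - t)⁺) :
    ∫ x, (w x - t)⁺ ^ (2 * γ) ≤
      lintegralPowLePowLIntegralFDerivConst (volume : Measure E) γ * Λ ^ γ *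
        (∫ x in S, (w x - t)⁺) ^ γ := by
  have hγ0 : 0 < γ := hγ.symm.pos
  have hsq_supp : HasCompactSupport fun x ↦ (w x - t)⁺ ^ 2 :=
    (hasCompactSupport_posPart_sub hw_supp ht).comp_left (g := fun y ↦ y ^ 2) (by simp)
  calc ∫ x, (w x - t)⁺ ^ (2 * γ) = ∫ x, ‖(w x - t)⁺ ^ 2‖ ^ γ := by
        simp only [norm_pow, Real.norm_of_nonneg (posPart_nonneg _),
          Real.rpow_mul (posPart_nonneg _), Real.rpow_two]
    _ ≤ _ := integral_norm_rpow_le_integral_norm_fderiv_rpow volume hdiff hsq_supp hγ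
    _ ≤ lintegralPowLePowLIntegralFDerivConst (volume : Measure E) γ *
          (Λ * ∫ x in S, (w x - t)⁺) ^ γ := by gcongr
    _ = _ := by
        rw [Real.mul_rpow hΛ (integral_nonneg fun _ ↦ posPart_nonneg _), mul_assoc]

lemma setIntegral_posPart_sub_le (hw : Continuous w) (hw_supp : HasCompactSupport w) {t s : ℝ}
    (ht : 0 ≤ t) (hts : t < s) {κ : ℝ} (hκ : 1 ≤ κ) :
    ∫ x in S, (w x - s)⁺ ≤ (s - t) ^ (1 - κ) * ∫ x, (w x - t)⁺ ^ κ := by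
  have hs_int := integrable_posPart_sub hw hw_supp (ht.trans hts.le)
  calc ∫ x in S, (w x - s)⁺ ≤ ∫ x, (w x - s)⁺ :=
        setIntegral_le_integral hs_int (.of_forall fun _ ↦ posPart_nonneg _)
    _ ≤ ∫ x, (s - t) ^ (1 - κ) * (w x - t)⁺ ^ κ :=
        integral_mono hs_int
          ((integrable_posPart_sub_rpow hw hw_supp ht (by linarith)).const_mul _)
          fun _ ↦ posPart_sub_le_rpow_mul_rpow hts hκ
    _ = _ := integral_const_mul _ _

lemma le_of_integral_posPart_sub_rpow_eq_zero (hw : Continuous w) (hw_supp : HasCompactSupport w)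
    {t κ : ℝ} (ht : 0 ≤ t) (hκ : 0 < κ) (hzero : ∫ x, (w x - t)⁺ ^ κ = 0) (x : E) : w x ≤ t := by
  have hcont : Continuous fun x ↦ (w x - t)⁺ ^ κ :=
    (by fun_prop : Continuous fun x ↦ (w x - t)⁺).rpow_const fun _ ↦ Or.inr hκ.le
  have hae := (integral_eq_zero_iff_of_nonneg (fun _ ↦ by positivity)
    (integrable_posPart_sub_rpow hw hw_supp ht hκ)).1 hzero
  have hx : (w x - t)⁺ ^ κ = 0 :=
    congrFun ((Continuous.ae_eq_iff_eq volume hcont continuous_const).1 hae) x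
  rwa [Real.rpow_eq_zero (posPart_nonneg _) hκ.ne', posPart_eq_zero, sub_nonpos] at hx

theorem le_add_of_levelSet_energy (hγ : (Module.finrank ℝ E : ℝ).HolderConjugate γ)
    (hw : Continuous w) (hw_supp : HasCompactSupport w) (hΛ : 0 ≤ Λ) (ht₀ : 0 ≤ t₀) (hd : 0 < d)
    (hdiff : ∀ t, t₀ ≤ t → ContDiff ℝ 1 fun x ↦ (w x - t)⁺ ^ 2)
    (henergy : ∀ t, t₀ ≤ t →
      ∫ x, ‖fderiv ℝ (fun x ↦ (w x - t)⁺ ^ 2) x‖ ≤ Λ * ∫ x in S, (w x - t)⁺)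
    (hsmall : lintegralPowLePowLIntegralFDerivConst (volume : Measure E) γ * Λ ^ γ *
      (∫ x in S, (w x - t₀)⁺) ^ (γ - 1) * 2 ^ ((2 * γ - 1) * γ / (γ - 1)) ≤ d ^ (2 * γ - 1))
    (x : E) : w x ≤ t₀ + d := by
  have hγ1 : 1 < γ := hγ.symm.lt
  set a : ℝ → ℝ := fun t ↦ ∫ x in S, (w x - t)⁺
  have hlevel (t : ℝ) (ht : t₀ ≤ t) := integral_posPart_sub_rpow_le hw_supp (ht₀.trans ht) hγ hΛ
    (hdiff t ht) (henergy t ht)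
  have hvanish : a (t₀ + d) = 0 := by
    refine stampacchia_eq_zero (l := 2 * γ - 1) (fun t ↦ integral_nonneg fun _ ↦ posPart_nonneg _)
      ?_ hd (by positivity) hγ1 (by linarith) ?_ hsmall
    · intro t (ht : t₀ ≤ t) s (hs : t₀ ≤ s) hts
      refine integral_mono (integrable_posPart_sub hw hw_supp (ht₀.trans hs)).integrableOn
        (integrable_posPart_sub hw hw_supp (ht₀.trans ht)).integrableOn fun x ↦ ?_
      exact posPart_mono (sub_le_sub_left hts _)
    · intro t s ht hts
      refine (setIntegral_posPart_sub_le hw hw_supp (ht₀.trans ht) hts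
        (by linarith : 1 ≤ 2 * γ)).trans ?_
      have : 0 < s - t := sub_pos.2 hts
      calc _ ≤ _ := mul_le_mul_of_nonneg_left (hlevel t ht) (by positivity)
        _ = _ := by rw [neg_sub]; ring
  have htop := hlevel (t₀ + d) (by linarith)
  change _ ≤ _ * a (t₀ + d) ^ γ at htop
  rw [hvanish, Real.zero_rpow (by linarith), mul_zero] at htop
  exact le_of_integral_posPart_sub_rpow_eq_zero hw hw_supp (by linarith) (by linarith)
    (htop.antisymm (integral_nonneg fun _ ↦ by positivity)) x

lemma rpow_mul_rpow_le_of_holderConjugate {n Λ I c d : ℝ} (hγ : n.HolderConjugate γ) (hΛ : 0 ≤ Λ)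
    (hI : 0 ≤ I) (hc : 0 ≤ c) (hd : 0 ≤ d) (h : Λ ^ n * I ≤ c ^ (n - 1) * d ^ (n + 1)) :
    Λ ^ γ * I ^ (γ - 1) ≤ c * d ^ (2 * γ - 1) := by
  have hconj : n * (γ - 1) = γ := by linarith [hγ.mul_eq_add]
  calc Λ ^ γ * I ^ (γ - 1) = (Λ ^ n * I) ^ (γ - 1) := by
        rw [Real.mul_rpow (by positivity) hI, ← Real.rpow_mul hΛ, hconj]
    _ ≤ (c ^ (n - 1) * d ^ (n + 1)) ^ (γ - 1) :=
        Real.rpow_le_rpow (by positivity) h (sub_nonneg.2 hγ.symm.lt.le)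
    _ = c * d ^ (2 * γ - 1) := by
        rw [Real.mul_rpow (by positivity) (by positivity), ← Real.rpow_mul hc, ← Real.rpow_mul hd,
          show (n - 1) * (γ - 1) = 1 by linarith, show (n + 1) * (γ - 1) = 2 * γ - 1 by linarith,
          Real.rpow_one]

variable (E) in
theorem exists_deGiorgi_bound (hE : 2 ≤ Module.finrank ℝ E) :
    ∃ c : ℝ, 0 < c ∧ ∀ (w : E → ℝ) (S : Set E) (Λ t₀ d : ℝ), Continuous w → HasCompactSupport w →
      0 ≤ Λ → 0 ≤ t₀ → 0 < d →
      (∀ t, t₀ ≤ t → ContDiff ℝ 1 fun x ↦ (w x - t)⁺ ^ 2) →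
      (∀ t, t₀ ≤ t →
        ∫ x, ‖fderiv ℝ (fun x ↦ (w x - t)⁺ ^ 2) x‖ ≤ Λ * ∫ x in S, (w x - t)⁺) →
      Λ ^ Module.finrank ℝ E * ∫ x in S, (w x - t₀)⁺ ≤ c * d ^ (Module.finrank ℝ E + 1) →
      ∀ x, w x ≤ t₀ + d := by
  have hn1 : (1 : ℝ) < Module.finrank ℝ E := by exact_mod_cast hE
  set n := Module.finrank ℝ E
  set γ : ℝ := Real.conjExponent n
  have hγ : (n : ℝ).HolderConjugate γ := .conjExponent hn1
  set K : ℝ := (lintegralPowLePowLIntegralFDerivConst (volume : Measure E) γ + 1) *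
    2 ^ ((2 * γ - 1) * γ / (γ - 1))
  have hK : 0 < K := by positivity
  refine ⟨K⁻¹ ^ (n - 1 : ℝ), by positivity, ?_⟩
  intro w S Λ t₀ d hw hw_supp hΛ ht₀ hd hdiff henergy hsmall
  refine le_add_of_levelSet_energy hγ hw hw_supp hΛ ht₀ hd hdiff henergy ?_
  set I := ∫ x in S, (w x - t₀)⁺
  have hI : 0 ≤ I := integral_nonneg fun _ ↦ posPart_nonneg _
  have hpow : Λ ^ γ * I ^ (γ - 1) ≤ K⁻¹ * d ^ (2 * γ - 1) := by
    refine rpow_mul_rpow_le_of_holderConjugate hγ hΛ hI (by positivity) hd.le ?_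
    exact_mod_cast hsmall
  calc _ = (lintegralPowLePowLIntegralFDerivConst (volume : Measure E) γ *
          2 ^ ((2 * γ - 1) * γ / (γ - 1))) * (Λ ^ γ * I ^ (γ - 1)) := by ring
    _ ≤ K * (K⁻¹ * d ^ (2 * γ - 1)) := by
        gcongr
        exact mul_le_mul_of_nonneg_right (by simp) (by positivity)
    _ = d ^ (2 * γ - 1) := mul_inv_cancel_left₀ hK.ne' _

end DeGiorgi

section WeakInequalities

lemma mul_add_inner_le_of_abs_sub_le {H : Type*} [NormedAddCommGroup H]
    [InnerProductSpace ℝ H] {f s t ε : ℝ} {z v w : H} (hst : |t - s| ≤ ε)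
    (hvw : ‖w - v‖ ≤ ε) :
    f * s + ⟪z, v⟫ ≤ f * t + ⟪z, w⟫ + ε * (|f| + ‖z‖) := by
  have hmul : f * (s - t) ≤ |f| * ε := (le_abs_self _).trans <| by
    rw [abs_mul, abs_sub_comm]
    gcongr
  have hinner : ⟪z, v - w⟫ ≤ ‖z‖ * ε := (real_inner_le_norm _ _).trans <| by
    rw [norm_sub_rev]
    gcongr
  rw [inner_sub_right] at hinner
  linarith

variable {E : Type*} [NormedAddCommGroup E] [InnerProductSpace ℝ E] [FiniteDimensional ℝ E]

lemma norm_gradient (f : E → ℝ) (x : E) : ‖∇ f x‖ = ‖fderiv ℝ f x‖ :=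
  LinearIsometryEquiv.norm_map _ _

lemma norm_gradient_sub_gradient (f g : E → ℝ) (x : E) :
    ‖∇ f x - ∇ g x‖ = ‖fderiv ℝ f x - fderiv ℝ g x‖ := by
  rw [gradient, gradient, ← map_sub, LinearIsometryEquiv.norm_map]

lemma continuous_gradient {f : E → ℝ} (hf : ContDiff ℝ 1 f) : Continuous (∇ f) :=
  (LinearIsometryEquiv.continuous _).comp (hf.continuous_fderiv one_ne_zero)

lemma hasCompactSupport_gradient {f : E → ℝ} (hf : HasCompactSupport f) :
    HasCompactSupport (∇ f) :=
  (hf.fderiv ℝ).comp_left (map_zero (InnerProductSpace.toDual ℝ E).symm)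

lemma gradient_eq_zero_of_notMem_tsupport {f : E → ℝ} {x : E} (hx : x ∉ tsupport f) :
    ∇ f x = 0 := by
  rw [← norm_eq_zero, norm_gradient, norm_eq_zero]
  exact Function.notMem_support.1 fun h ↦ hx (support_fderiv_subset ℝ h)

variable [MeasurableSpace E] [BorelSpace E]

lemma integrable_mul_of_hasCompactSupport {f φ : E → ℝ} (hf : LocallyIntegrable f)
    (hφ : Continuous φ) (hφ_supp : HasCompactSupport φ) : Integrable fun x ↦ f x * φ x :=
  hf.integrable_smul_right_of_hasCompactSupport hφ hφ_supp

lemma integrable_inner_of_hasCompactSupport {Z Y : E → E} (hZ : LocallyIntegrable Z)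
    (hY : Continuous Y) (hY_supp : HasCompactSupport Y) : Integrable fun x ↦ ⟪Z x, Y x⟫ := by
  refine (hZ.integrable_smul_left_of_hasCompactSupport hY.norm hY_supp.norm).mono
    (hZ.aestronglyMeasurable.inner hY.aestronglyMeasurable) (.of_forall fun x ↦ ?_)
  rw [norm_smul, norm_norm, mul_comm]
  exact norm_inner_le_norm _ _

lemma integrable_mul_add_inner_gradient {f φ : E → ℝ} {Z : E → E} (hf : LocallyIntegrable f)
    (hZ : LocallyIntegrable Z) (hφ : ContDiff ℝ 1 φ) (hφ_supp : HasCompactSupport φ) :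
    Integrable fun x ↦ f x * φ x + ⟪Z x, ∇ φ x⟫ :=
  (integrable_mul_of_hasCompactSupport hf hφ.continuous hφ_supp).add
    (integrable_inner_of_hasCompactSupport hZ (continuous_gradient hφ)
      (hasCompactSupport_gradient hφ_supp))

lemma fderiv_normed_convolution (β : ContDiffBump (0 : E)) {φ : E → ℝ} (hφ : ContDiff ℝ 1 φ)
    (hφ_supp : HasCompactSupport φ) (x : E) :
    fderiv ℝ (β.normed volume ⋆[ContinuousLinearMap.lsmul ℝ ℝ, volume] φ) x =
      (β.normed volume ⋆[ContinuousLinearMap.lsmul ℝ ℝ, volume] fderiv ℝ φ) x := by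
  rw [(hφ_supp.hasFDerivAt_convolution_right (ContinuousLinearMap.lsmul ℝ ℝ)
    (β.continuous_normed (μ := volume)).locallyIntegrable hφ x).fderiv]
  rfl

lemma exists_smooth_approx {φ : E → ℝ} (hφ : ContDiff ℝ 1 φ) (hφ_supp : HasCompactSupport φ)
    (hφ_nonneg : ∀ x, 0 ≤ φ x) {ε : ℝ} (hε : 0 < ε) :
    ∃ ψ : E → ℝ, ContDiff ℝ (⊤ : ℕ∞) ψ ∧ (∀ x, 0 ≤ ψ x) ∧
      tsupport ψ ⊆ cthickening 1 (tsupport φ) ∧ (∀ x, |ψ x - φ x| ≤ ε) ∧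
      ∀ x, ‖∇ ψ x - ∇ φ x‖ ≤ ε := by
  have hfderiv : Continuous (fderiv ℝ φ) := hφ.continuous_fderiv one_ne_zero
  obtain ⟨δ₁, hδ₁, hφ_unif⟩ := Metric.uniformContinuous_iff.1
    (hφ.continuous.uniformContinuous_of_tendsto_cocompact hφ_supp.is_zero_at_infty) ε hε
  obtain ⟨δ₂, hδ₂, hfderiv_unif⟩ := Metric.uniformContinuous_iff.1
    (hfderiv.uniformContinuous_of_tendsto_cocompact (hφ_supp.fderiv ℝ).is_zero_at_infty) ε hε
  have hδ : 0 < min 1 (min δ₁ δ₂) := by positivity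
  let β : ContDiffBump (0 : E) := ⟨_, _, half_pos hδ, half_lt_self hδ⟩
  let ψ := β.normed volume ⋆[ContinuousLinearMap.lsmul ℝ ℝ, volume] φ
  have hβ {x y : E} (hy : y ∈ ball x β.rOut) : dist y x < 1 ∧ dist y x < δ₁ ∧ dist y x < δ₂ := by
    simpa [β] using hy
  refine ⟨ψ, β.hasCompactSupport_normed.contDiff_convolution_left _ β.contDiff_normed
    hφ.continuous.locallyIntegrable, fun x ↦ integral_nonneg fun t ↦
      mul_nonneg (β.nonneg_normed t) (hφ_nonneg _), ?_, fun x ↦ ?_, fun x ↦ ?_⟩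
  · refine closure_minimal (fun x hx ↦ ?_) isClosed_cthickening
    by_contra hx_far
    have hzero {y : E} (hy : dist y x < 1) : φ y = 0 := by
      refine image_eq_zero_of_notMem_tsupport fun hy_mem ↦ hx_far ?_
      exact mem_cthickening_of_dist_le x y 1 _ hy_mem (by rw [dist_comm]; exact hy.le)
    have hdist := β.dist_normed_convolution_le (μ := volume) (x₀ := x) (ε := 0)
      hφ.continuous.aestronglyMeasurable fun y hy ↦ by
        rw [hzero (hβ hy).1, hzero (by simp), dist_self]
    rw [hzero (by simp)] at hdist
    exact hx (dist_le_zero.1 hdist)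
  · exact β.dist_normed_convolution_le hφ.continuous.aestronglyMeasurable
      fun y hy ↦ (hφ_unif (hβ hy).2.1).le
  · rw [norm_gradient_sub_gradient, fderiv_normed_convolution β hφ hφ_supp, ← dist_eq_norm]
    exact β.dist_normed_convolution_le hfderiv.aestronglyMeasurable
      fun y hy ↦ (hfderiv_unif (hβ hy).2.2).le

theorem integral_mul_add_inner_gradient_nonpos {f : E → ℝ} {Z : E → E}
    (hf : LocallyIntegrable f) (hZ : LocallyIntegrable Z)
    (hsmooth : ∀ φ : E → ℝ, ContDiff ℝ (⊤ : ℕ∞) φ → HasCompactSupport φ → (∀ x, 0 ≤ φ x) →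
      ∫ x, (f x * φ x + ⟪Z x, ∇ φ x⟫) ≤ 0)
    {φ : E → ℝ} (hφ : ContDiff ℝ 1 φ) (hφ_supp : HasCompactSupport φ)
    (hφ_nonneg : ∀ x, 0 ≤ φ x) :
    ∫ x, (f x * φ x + ⟪Z x, ∇ φ x⟫) ≤ 0 := by
  set K := cthickening 1 (tsupport φ)
  have hK : IsCompact K := hφ_supp.isCompact.cthickening
  have hbound_int : IntegrableOn (fun x ↦ |f x| + ‖Z x‖) K :=
    (hf.integrableOn_isCompact hK).abs.add (hZ.integrableOn_isCompact hK).norm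
  have happrox (ε : ℝ) (hε : 0 < ε) :
      ∫ x, (f x * φ x + ⟪Z x, ∇ φ x⟫) ≤ ε * ∫ x in K, (|f x| + ‖Z x‖) := by
    obtain ⟨ψ, hψ, hψ_nonneg, hψ_tsupport, hφψ, hgrad⟩ :=
      exists_smooth_approx hφ hφ_supp hφ_nonneg hε
    have hψ_supp : HasCompactSupport ψ := hK.of_isClosed_subset (isClosed_tsupport ψ) hψ_tsupport
    have hψ_int := integrable_mul_add_inner_gradient hf hZ (hψ.of_le (by simp)) hψ_supp
    have hK_int :=
      IntegrableOn.integrable_indicator (hbound_int.const_mul ε) hK.measurableSet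
    calc ∫ x, (f x * φ x + ⟪Z x, ∇ φ x⟫)
        ≤ ∫ x, (f x * ψ x + ⟪Z x, ∇ ψ x⟫ + K.indicator (fun x ↦ ε * (|f x| + ‖Z x‖)) x) := by
          refine integral_mono (integrable_mul_add_inner_gradient hf hZ hφ hφ_supp)
            (hψ_int.add hK_int) fun x ↦ ?_
          by_cases hx : x ∈ K
          · rw [indicator_of_mem hx]
            exact mul_add_inner_le_of_abs_sub_le (hφψ x) (hgrad x)
          · have hxφ : x ∉ tsupport φ := fun h ↦ hx (self_subset_cthickening _ h)
            have hxψ : x ∉ tsupport ψ := fun h ↦ hx (hψ_tsupport h)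
            simp [hx, image_eq_zero_of_notMem_tsupport, gradient_eq_zero_of_notMem_tsupport,
              hxφ, hxψ]
      _ = (∫ x, (f x * ψ x + ⟪Z x, ∇ ψ x⟫)) + ε * ∫ x in K, (|f x| + ‖Z x‖) := by
          rw [integral_add hψ_int hK_int, integral_indicator hK.measurableSet,
            integral_const_mul]
      _ ≤ ε * ∫ x in K, (|f x| + ‖Z x‖) :=
          add_le_of_nonpos_left (hsmooth ψ hψ hψ_supp hψ_nonneg)
  have hlim : Tendsto (fun ε ↦ ε * ∫ x in K, (|f x| + ‖Z x‖)) (nhdsWithin 0 (Ioi 0)) (nhds 0) :=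
    tendsto_nhdsWithin_of_tendsto_nhds
      (by simpa using (continuous_mul_const (∫ x in K, (|f x| + ‖Z x‖))).tendsto (0 : ℝ))
  exact ge_of_tendsto hlim (eventually_nhdsWithin_of_forall happrox)

end WeakInequalities

section Truncation

lemma hasFDerivAt_indicator_of_frontier {V W : Type*} [NormedAddCommGroup V] [NormedSpace ℝ V]
    [NormedAddCommGroup W] [NormedSpace ℝ W] {U : Set V} {f : V → W} {f' : V → V →L[ℝ] W}
    (hU : IsOpen U) (hf : ∀ x, HasFDerivAt f (f' x) x) (hf_front : ∀ x ∈ frontier U, f x = 0)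
    (hf'_front : ∀ x ∈ frontier U, f' x = 0) (x : V) :
    HasFDerivAt (U.indicator f) (U.indicator f' x) x := by
  by_cases hx : x ∈ U
  · rw [indicator_of_mem hx]
    exact (hf x).congr_of_eventuallyEq
      (eventually_of_mem (hU.mem_nhds hx) fun y hy ↦ indicator_of_mem hy f)
  rw [indicator_of_notMem hx]
  by_cases hx_cl : x ∈ closure U
  · have hx_front : x ∈ frontier U := hU.frontier_eq ▸ ⟨hx_cl, hx⟩
    have hfx := hf x
    rw [hf'_front x hx_front, hasFDerivAt_iff_isLittleO] at hfx
    rw [hasFDerivAt_iff_isLittleO]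
    simp only [hf_front x hx_front, indicator_of_notMem hx, sub_zero,
      zero_apply] at hfx ⊢
    exact (Asymptotics.isBigO_of_le _ fun y ↦ norm_indicator_le_norm_self f y).trans_isLittleO hfx
  · refine (hasFDerivAt_const (0 : W) x).congr_of_eventuallyEq ?_
    filter_upwards [isClosed_closure.isOpen_compl.mem_nhds hx_cl] with y hy
    exact indicator_of_notMem (fun h ↦ hy (subset_closure h)) f

lemma hasDerivAt_posPart_sq (y : ℝ) : HasDerivAt (fun y : ℝ ↦ y⁺ ^ 2) (2 * y⁺) y := by
  have hsq : (fun y : ℝ ↦ y⁺ ^ 2) = (Ioi 0).indicator fun y ↦ y ^ 2 := by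
    ext y
    by_cases hy : 0 < y
    · simp [hy, posPart_of_nonneg hy.le]
    · simp [hy, posPart_of_nonpos (not_lt.1 hy)]
  have hind := hasFDerivAt_indicator_of_frontier (isOpen_Ioi (a := 0))
    (fun z : ℝ ↦ (hasDerivAt_pow 2 z).hasFDerivAt) (by simp) (by simp) y
  rw [hsq]
  refine hind.hasDerivAt.congr_deriv ?_
  by_cases hy : 0 < y
  · simp [hy, posPart_of_nonneg hy.le]
  · simp [hy, posPart_of_nonpos (not_lt.1 hy)]

variable {X : Type*} {U : Set X} {v : X → ℝ} {x : X}

/-- The positive part of `v` inside `U`, extended by `0`. -/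
def truncation (U : Set X) (v : X → ℝ) : X → ℝ := U.indicator fun x ↦ (v x)⁺

lemma truncation_of_mem (hx : x ∈ U) : truncation U v x = (v x)⁺ := indicator_of_mem hx _

lemma truncation_of_notMem (hx : x ∉ U) : truncation U v x = 0 := indicator_of_notMem hx _

lemma truncation_nonneg : 0 ≤ truncation U v x := indicator_nonneg (fun _ _ ↦ posPart_nonneg _) x

lemma mem_of_truncation_pos (h : 0 < truncation U v x) : x ∈ U := by
  by_contra hx
  exact h.ne' (truncation_of_notMem hx)

lemma truncation_eq_of_pos (h : 0 < truncation U v x) : truncation U v x = v x := by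
  have hx := mem_of_truncation_pos h
  rw [truncation_of_mem hx] at h ⊢
  exact posPart_of_nonneg (posPart_pos_iff.1 h).le

lemma posPart_truncation_sub {t : ℝ} (ht : 0 ≤ t) :
    (truncation U v x - t)⁺ = U.indicator (fun x ↦ (v x - t)⁺) x := by
  by_cases hx : x ∈ U
  · rw [truncation_of_mem hx, indicator_of_mem hx]
    simp only [posPart_def]
    rcases le_total (v x) 0 with hv | hv
    · rw [sup_of_le_right hv, sup_of_le_right (by linarith), sup_of_le_right (by linarith)]
    · rw [sup_of_le_left hv]
  · rw [truncation_of_notMem hx, indicator_of_notMem hx, posPart_of_nonpos (by linarith)]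

lemma continuous_truncation [TopologicalSpace X] (hv : Continuous v)
    (hfront : ∀ x ∈ frontier U, v x ≤ 0) :
    Continuous (truncation U v) :=
  continuous_indicator (fun x hx ↦ posPart_of_nonpos (hfront x hx)) (by fun_prop)

lemma hasCompactSupport_truncation [PseudoMetricSpace X] [ProperSpace X]
    (hU : Bornology.IsBounded U) :
    HasCompactSupport (truncation U v) :=
  .intro hU.isCompact_closure fun _ hx ↦ truncation_of_notMem fun h ↦ hx (subset_closure h)

variable {V : Type*} [NormedAddCommGroup V] [NormedSpace ℝ V] {U : Set V} {v : V → ℝ} {t : ℝ}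

lemma hasFDerivAt_posPart_truncation_sub_sq (hU : IsOpen U)
    (hv : Differentiable ℝ v) (hfront : ∀ x ∈ frontier U, v x ≤ 0) (ht : 0 ≤ t) (x : V) :
    HasFDerivAt (fun x ↦ (truncation U v x - t)⁺ ^ 2)
      ((2 * (truncation U v x - t)⁺) • fderiv ℝ v x) x := by
  have hfront_zero (x : V) (hx : x ∈ frontier U) : (v x - t)⁺ = 0 :=
    posPart_of_nonpos (by linarith [hfront x hx])
  have hind := hasFDerivAt_indicator_of_frontier (f := fun x ↦ (v x - t)⁺ ^ 2) hU
    (fun x ↦ (hasDerivAt_posPart_sq (v x - t)).comp_hasFDerivAt x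
      ((hv x).hasFDerivAt.sub_const t))
    (fun x hx ↦ by simp [hfront_zero x hx]) (fun x hx ↦ by simp [hfront_zero x hx]) x
  have hsq : (fun x ↦ (truncation U v x - t)⁺ ^ 2) = U.indicator fun x ↦ (v x - t)⁺ ^ 2 := by
    funext y
    by_cases hy : y ∈ U <;> simp [posPart_truncation_sub ht, hy]
  rw [hsq]
  refine hind.congr_fderiv ?_
  by_cases hx : x ∈ U <;> simp [posPart_truncation_sub ht, hx]

lemma contDiff_posPart_truncation_sub_sq (hU : IsOpen U) (hv : ContDiff ℝ 1 v)
    (hfront : ∀ x ∈ frontier U, v x ≤ 0) (ht : 0 ≤ t) :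
    ContDiff ℝ 1 fun x ↦ (truncation U v x - t)⁺ ^ 2 := by
  have hderiv := hasFDerivAt_posPart_truncation_sub_sq hU (hv.differentiable one_ne_zero) hfront ht
  refine contDiff_one_iff_fderiv.2 ⟨fun x ↦ (hderiv x).differentiableAt, ?_⟩
  rw [funext fun x ↦ (hderiv x).fderiv]
  have := continuous_truncation hv.continuous hfront
  have := hv.continuous_fderiv one_ne_zero
  fun_prop

lemma gradient_posPart_truncation_sub_sq {E : Type*} [NormedAddCommGroup E]
    [InnerProductSpace ℝ E] [CompleteSpace E] {U : Set E} {v : E → ℝ} (hU : IsOpen U)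
    (hv : Differentiable ℝ v) (hfront : ∀ x ∈ frontier U, v x ≤ 0) (ht : 0 ≤ t) (x : E) :
    ∇ (fun x ↦ (truncation U v x - t)⁺ ^ 2) x = (2 * (truncation U v x - t)⁺) • ∇ v x := by
  rw [gradient, (hasFDerivAt_posPart_truncation_sub_sq hU hv hfront ht x).fderiv, gradient,
    map_smul]

end Truncation

section PointwiseInequality

variable {p α C₁ C₂ x ρ : ℝ}

lemma mul_rpow_sub_one (hp : p ≠ 0) (hx : 0 ≤ x) : x * x ^ (p - 1) = x ^ p := by
  rw [← Real.rpow_one_add' hx (by simpa using hp), add_sub_cancel]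

lemma rpow_sub_one_mul_le_weighted {μ : ℝ} (hp : 1 ≤ p) (hμ : 0 < μ) (hx : 0 ≤ x) (hρ : 0 ≤ ρ) :
    x ^ (p - 1) * ρ ≤ μ * x ^ p + μ ^ (-(p - 1)) * ρ ^ p := by
  rw [← mul_rpow_sub_one (p := p) (by linarith) hx, ← mul_rpow_sub_one (p := p) (by linarith) hρ]
  rcases le_total ρ (μ * x) with hle | hle
  · calc x ^ (p - 1) * ρ ≤ x ^ (p - 1) * (μ * x) := by gcongr
      _ = μ * (x * x ^ (p - 1)) := by ring
      _ ≤ _ := le_add_of_nonneg_right (by positivity)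
  · have hx_le : x ≤ μ⁻¹ * ρ := by rwa [inv_mul_eq_div, le_div_iff₀' hμ]
    calc x ^ (p - 1) * ρ ≤ (μ⁻¹ * ρ) ^ (p - 1) * ρ := by gcongr
      _ = μ ^ (-(p - 1)) * (ρ * ρ ^ (p - 1)) := by
        rw [Real.mul_rpow (by positivity) hρ, Real.inv_rpow hμ.le, ← Real.rpow_neg hμ.le]
        ring
      _ ≤ _ := le_add_of_nonneg_left (by positivity)

lemma rpow_sub_one_mul_le_add (hp : 1 ≤ p) (hx : 0 ≤ x) (hρ : 0 ≤ ρ) :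
    x ^ (p - 1) * ρ ≤ x ^ p + ρ ^ p := by
  simpa using rpow_sub_one_mul_le_weighted hp one_pos hx hρ

lemma mul_rpow_le_mul_add {β c : ℝ} (hα : 0 ≤ α) (hαp : α ≤ p) (hβ : 0 ≤ β) (hx : 0 ≤ x)
    (hρ : 0 < ρ) (hβc : β ≤ c * ρ ^ (p - α)) :
    β * x ^ α ≤ c * (ρ ^ p + x ^ p) := by
  have hc : 0 ≤ c := nonneg_of_mul_nonneg_left (hβ.trans hβc) (by positivity)
  rcases le_total x ρ with hle | hle
  · calc β * x ^ α ≤ c * ρ ^ (p - α) * ρ ^ α := by gcongr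
      _ = c * ρ ^ p := by rw [mul_assoc, ← Real.rpow_add hρ, sub_add_cancel]
      _ ≤ _ := by gcongr; exact le_add_of_nonneg_right (by positivity)
  · have hx' : 0 < x := hρ.trans_le hle
    calc β * x ^ α ≤ c * x ^ (p - α) * x ^ α := by
          gcongr
          refine hβc.trans ?_
          gcongr
      _ = c * x ^ p := by rw [mul_assoc, ← Real.rpow_add hx', sub_add_cancel]
      _ ≤ _ := by gcongr; exact le_add_of_nonneg_left (by positivity)

/-- The constant in front of the error term `ρ ^ p` in the energy estimate for a flux with
coercivity constant `C₁` and growth constant `C₂`. -/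
def energyConst (p C₁ C₂ : ℝ) : ℝ := 4 * C₂ * (C₁ / (8 * C₂)) ^ (-(p - 1)) + 4 * C₁

lemma energyConst_pos (hC₁ : 0 < C₁) (hC₂ : 0 < C₂) : 0 < energyConst p C₁ C₂ := by
  unfold energyConst
  positivity

variable {E : Type*} [NormedAddCommGroup E] [InnerProductSpace ℝ E] {a ξ d : E}

lemma two_mul_inner_le_of_growth (hp : 1 ≤ p) (hC₁ : 0 < C₁) (hC₂ : 0 < C₂)
    (ha : ‖a‖ ≤ C₂ * ‖ξ‖ ^ (p - 1)) (hρ : 0 ≤ ρ) (hd : ‖d‖ ≤ 2 * ρ) :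
    2 * ⟪a, d⟫ ≤ C₁ / 2 * ‖ξ‖ ^ p + 4 * C₂ * (C₁ / (8 * C₂)) ^ (-(p - 1)) * ρ ^ p := by
  have hinner : ⟪a, d⟫ ≤ C₂ * ‖ξ‖ ^ (p - 1) * (2 * ρ) :=
    (real_inner_le_norm a d).trans (by gcongr)
  calc 2 * ⟪a, d⟫ ≤ 4 * C₂ * (‖ξ‖ ^ (p - 1) * ρ) := by linarith
    _ ≤ 4 * C₂ * (C₁ / (8 * C₂) * ‖ξ‖ ^ p + (C₁ / (8 * C₂)) ^ (-(p - 1)) * ρ ^ p) := by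
      gcongr
      exact rpow_sub_one_mul_le_weighted hp (by positivity) (norm_nonneg ξ) hρ
    _ = _ := by field_simp; ring

lemma norm_sub_le_inner_sub_of_coercive {β : ℝ} (hp : 1 ≤ p) (hα : 0 ≤ α) (hαp : α ≤ p)
    (hC₁ : 0 < C₁) (hC₂ : 0 < C₂) (hcoer : C₁ * ‖ξ‖ ^ p ≤ ⟪ξ, a⟫)
    (hgrowth : ‖a‖ ≤ C₂ * ‖ξ‖ ^ (p - 1)) (hρ : 0 < ρ) (hd : ‖d‖ ≤ 2 * ρ) (hβ : 0 ≤ β)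
    (hβρ : β ≤ C₁ / 2 * ρ ^ (p - α)) :
    C₁ * ρ ^ (p - 1) * ‖ξ - d‖ ≤
      2 * ⟪a, ξ - d⟫ - β * ‖ξ‖ ^ α + energyConst p C₁ C₂ * ρ ^ p := by
  have hlower : β * ‖ξ‖ ^ α ≤ C₁ / 2 * (ρ ^ p + ‖ξ‖ ^ p) :=
    mul_rpow_le_mul_add hα hαp hβ (norm_nonneg ξ) hρ hβρ
  have hcross := two_mul_inner_le_of_growth hp hC₁ hC₂ hgrowth hρ.le hd
  have hlin : ρ ^ (p - 1) * ‖ξ - d‖ ≤ 3 * ρ ^ p + ‖ξ‖ ^ p :=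
    calc ρ ^ (p - 1) * ‖ξ - d‖ ≤ ρ ^ (p - 1) * (‖ξ‖ + 2 * ρ) := by
          gcongr
          exact (norm_sub_le ξ d).trans (by gcongr)
      _ = ρ ^ (p - 1) * ‖ξ‖ + 2 * (ρ * ρ ^ (p - 1)) := by ring
      _ ≤ (ρ ^ p + ‖ξ‖ ^ p) + 2 * ρ ^ p := by
        rw [mul_rpow_sub_one (by linarith) hρ.le]
        gcongr
        exact rpow_sub_one_mul_le_add hp hρ.le (norm_nonneg ξ)
      _ = _ := by ring
  have hlin' := mul_le_mul_of_nonneg_left hlin hC₁.le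
  have hρp : 0 < C₁ * ρ ^ p := by positivity
  rw [inner_sub_right, real_inner_comm, energyConst]
  linarith

end PointwiseInequality

section Energy

variable {E : Type*} [NormedAddCommGroup E] [InnerProductSpace ℝ E] [FiniteDimensional ℝ E]
  [MeasurableSpace E] [BorelSpace E]

/-- `u` is a `C¹` weak solution of `div Z + b ‖∇ u‖ ^ α ≥ a`, where the flux `Z` obeys the
`p`-growth conditions `C₁ ‖∇ u‖ ^ p ≤ ⟪∇ u, Z⟫` and `‖Z‖ ≤ C₂ ‖∇ u‖ ^ (p - 1)`. In the application
`Z x = A (x, ∇ u x)`; only the values of `A` along `∇ u` matter. -/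
structure IsSubsolution (p α C₁ C₂ : ℝ) (Z : E → E) (b a u : E → ℝ) : Prop where
  contDiff : ContDiff ℝ 1 u
  coercive x : C₁ * ‖∇ u x‖ ^ p ≤ ⟪∇ u x, Z x⟫
  growth x : ‖Z x‖ ≤ C₂ * ‖∇ u x‖ ^ (p - 1)
  locallyIntegrable_flux : LocallyIntegrable Z
  locallyIntegrable_source : LocallyIntegrable fun x ↦ a x - b x * ‖∇ u x‖ ^ α
  integral_nonpos φ : ContDiff ℝ 1 φ → HasCompactSupport φ → (∀ x, 0 ≤ φ x) →
    ∫ x, ((a x - b x * ‖∇ u x‖ ^ α) * φ x + ⟪Z x, ∇ φ x⟫) ≤ 0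

/-- `ψ` dominates `u` on the boundary of the bounded open set `U` and `u - ψ ≤ W` inside, with
slope of `ψ` comparable to `ρ`. There `B` bounds the coefficient `b` and `h` bounds the source `a`
from below wherever `u > ψ`; the inequality `coupling` makes the gradient term `b ‖∇ u‖ ^ α` a small
perturbation of the `p`-growth terms. -/
structure IsBarrier (p α C₁ : ℝ) (b a u : E → ℝ) (U : Set E) (ψ : E → ℝ) (ρ W B h : ℝ) :
    Prop where
  isOpen : IsOpen U
  isBounded : Bornology.IsBounded U
  contDiff : ContDiff ℝ 1 ψ
  le_of_mem_frontier : ∀ x ∈ frontier U, u x ≤ ψ x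
  sub_le : ∀ x ∈ U, u x - ψ x ≤ W
  slope_pos : 0 < ρ
  norm_gradient_le : ∀ x ∈ U, ‖∇ ψ x‖ ≤ 2 * ρ
  height_nonneg : 0 ≤ W
  coeff_nonneg : 0 ≤ B
  coeff_le : ∀ᵐ x, x ∈ U → b x ≤ B
  le_source : ∀ᵐ x, x ∈ U → ψ x < u x → h ≤ a x
  coupling : B * W ≤ C₁ / 2 * ρ ^ (p - α)

/-- The points at which `u` and `ψ` are not both critical. Outside this set the flux vanishes. -/
def noncriticalSet (u ψ : E → ℝ) : Set E := {x | ¬(∇ u x = 0 ∧ ∇ ψ x = 0)}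

lemma measurableSet_noncriticalSet {u ψ : E → ℝ} (hu : ContDiff ℝ 1 u) (hψ : ContDiff ℝ 1 ψ) :
    MeasurableSet (noncriticalSet u ψ) :=
  ((isClosed_eq (continuous_gradient hu) continuous_const).inter
    (isClosed_eq (continuous_gradient hψ) continuous_const)).measurableSet.compl

variable {p α C₁ C₂ ρ W B h : ℝ} {Z : E → E} {b a u ψ : E → ℝ} {U : Set E}

lemma sub_gradient_flux_le {x : E} (hp : 1 ≤ p) (hα : 0 < α) (hαp : α ≤ p) (hC₁ : 0 < C₁)
    (hC₂ : 0 < C₂) (hu : IsSubsolution p α C₁ C₂ Z b a u)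
    (hψ : IsBarrier p α C₁ b a u U ψ ρ W B h) (hx : x ∈ U) :
    C₁ * ρ ^ (p - 1) * ‖∇ u x - ∇ ψ x‖ ≤ 2 * ⟪Z x, ∇ u x - ∇ ψ x⟫ - B * W * ‖∇ u x‖ ^ α +
      (noncriticalSet u ψ).indicator (fun _ ↦ energyConst p C₁ C₂ * ρ ^ p) x := by
  by_cases hcrit : x ∈ noncriticalSet u ψ
  · rw [indicator_of_mem hcrit]
    exact norm_sub_le_inner_sub_of_coercive hp hα.le hαp hC₁ hC₂ (hu.coercive x) (hu.growth x)
      hψ.slope_pos (hψ.norm_gradient_le x hx) (mul_nonneg hψ.coeff_nonneg hψ.height_nonneg)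
      hψ.coupling
  · obtain ⟨hux, hψx⟩ := not_not.1 hcrit
    simp [indicator_of_notMem hcrit, hux, hψx, Real.zero_rpow hα.ne']

namespace IsBarrier

lemma sub_nonpos_of_mem_frontier (hψ : IsBarrier p α C₁ b a u U ψ ρ W B h) :
    ∀ x ∈ frontier U, (u - ψ) x ≤ 0 :=
  fun x hx ↦ sub_nonpos.2 (hψ.le_of_mem_frontier x hx)

lemma continuous_truncation_sub (hψ : IsBarrier p α C₁ b a u U ψ ρ W B h) (hu : Continuous u) :
    Continuous (truncation U (u - ψ)) :=
  continuous_truncation (hu.sub hψ.contDiff.continuous) hψ.sub_nonpos_of_mem_frontier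

lemma hasCompactSupport_truncation_sub (hψ : IsBarrier p α C₁ b a u U ψ ρ W B h) :
    HasCompactSupport (truncation U (u - ψ)) :=
  hasCompactSupport_truncation hψ.isBounded

lemma contDiff_excess_sq (hψ : IsBarrier p α C₁ b a u U ψ ρ W B h) (hu : ContDiff ℝ 1 u) {t : ℝ}
    (ht : 0 ≤ t) : ContDiff ℝ 1 fun x ↦ (truncation U (u - ψ) x - t)⁺ ^ 2 :=
  contDiff_posPart_truncation_sub_sq hψ.isOpen (hu.sub hψ.contDiff)
    hψ.sub_nonpos_of_mem_frontier ht

lemma hasCompactSupport_excess_sq (hψ : IsBarrier p α C₁ b a u U ψ ρ W B h) {t : ℝ}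
    (ht : 0 ≤ t) : HasCompactSupport fun x ↦ (truncation U (u - ψ) x - t)⁺ ^ 2 :=
  (hasCompactSupport_posPart_sub hψ.hasCompactSupport_truncation_sub ht).comp_left
    (g := fun y ↦ y ^ 2) (zero_pow two_ne_zero)

lemma gradient_excess_sq (hψ : IsBarrier p α C₁ b a u U ψ ρ W B h) (hu : ContDiff ℝ 1 u) {t : ℝ}
    (ht : 0 ≤ t) (x : E) : ∇ (fun x ↦ (truncation U (u - ψ) x - t)⁺ ^ 2) x =
      (2 * (truncation U (u - ψ) x - t)⁺) • (∇ u x - ∇ ψ x) := by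
  have hu' := hu.differentiable one_ne_zero
  have hψ' := hψ.contDiff.differentiable one_ne_zero
  rw [gradient_posPart_truncation_sub_sq hψ.isOpen (hu'.sub hψ') hψ.sub_nonpos_of_mem_frontier ht,
    gradient, fderiv_sub (hu' x) (hψ' x), map_sub, gradient, gradient]

end IsBarrier

lemma excess_energy_density_le (hp : 1 ≤ p) (hα : 0 < α) (hαp : α ≤ p) (hC₁ : 0 < C₁)
    (hC₂ : 0 < C₂) (hu : IsSubsolution p α C₁ C₂ Z b a u)
    (hψ : IsBarrier p α C₁ b a u U ψ ρ W B h) {t : ℝ} (ht : 0 ≤ t) {x : E}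
    (hbx : x ∈ U → b x ≤ B) (hax : x ∈ U → ψ x < u x → h ≤ a x) :
    C₁ * ρ ^ (p - 1) * ((truncation U (u - ψ) x - t)⁺ * ‖∇ u x - ∇ ψ x‖) +
        h * (truncation U (u - ψ) x - t)⁺ ^ 2 ≤
      (a x - b x * ‖∇ u x‖ ^ α) * (truncation U (u - ψ) x - t)⁺ ^ 2 +
        ⟪Z x, ∇ (fun x ↦ (truncation U (u - ψ) x - t)⁺ ^ 2) x⟫ +
        energyConst p C₁ C₂ * ρ ^ p *
          (noncriticalSet u ψ).indicator (fun x ↦ (truncation U (u - ψ) x - t)⁺) x := by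
  rw [hψ.gradient_excess_sq hu.contDiff ht, inner_smul_right]
  have hind : energyConst p C₁ C₂ * ρ ^ p *
      (noncriticalSet u ψ).indicator (fun x ↦ (truncation U (u - ψ) x - t)⁺) x =
      (noncriticalSet u ψ).indicator (fun _ ↦ energyConst p C₁ C₂ * ρ ^ p) x *
        (truncation U (u - ψ) x - t)⁺ := by
    by_cases hx : x ∈ noncriticalSet u ψ <;> simp [hx]
  rw [hind]
  rcases le_or_gt (truncation U (u - ψ) x) t with hle | hlt
  · simp [posPart_of_nonpos (sub_nonpos.2 hle)]
  have hxU : x ∈ U := mem_of_truncation_pos (ht.trans_lt hlt)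
  rw [posPart_of_nonneg (sub_nonneg.2 hlt.le), truncation_eq_of_pos (ht.trans_lt hlt),
    Pi.sub_apply]
  rw [truncation_eq_of_pos (ht.trans_lt hlt), Pi.sub_apply] at hlt
  set m := u x - ψ x - t
  have hm_pos : 0 < m := sub_pos.2 hlt
  have hflux := mul_le_mul_of_nonneg_right
    (sub_gradient_flux_le hp hα hαp hC₁ hC₂ hu hψ hxU) hm_pos.le
  have hlower : b x * m ≤ B * W := by
    have := hψ.coeff_nonneg
    have := hψ.sub_le x hxU
    calc b x * m ≤ B * m := by gcongr; exact hbx hxU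
      _ ≤ B * W := by gcongr; linarith
  have hlower' := mul_le_mul_of_nonneg_right hlower
    (by positivity : 0 ≤ ‖∇ u x‖ ^ α * m)
  have hsource := mul_le_mul_of_nonneg_right (hax hxU (by linarith)) (sq_nonneg m)
  linarith

theorem excess_energy_le (hp : 1 ≤ p) (hα : 0 < α) (hαp : α ≤ p) (hC₁ : 0 < C₁)
    (hC₂ : 0 < C₂) (hu : IsSubsolution p α C₁ C₂ Z b a u)
    (hψ : IsBarrier p α C₁ b a u U ψ ρ W B h) {t : ℝ} (ht : 0 ≤ t) :
    C₁ * ρ ^ (p - 1) * (∫ x, (truncation U (u - ψ) x - t)⁺ * ‖∇ u x - ∇ ψ x‖) +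
        h * (∫ x, (truncation U (u - ψ) x - t)⁺ ^ 2) ≤
      energyConst p C₁ C₂ * ρ ^ p *
        ∫ x in noncriticalSet u ψ, (truncation U (u - ψ) x - t)⁺ := by
  have hw := hψ.continuous_truncation_sub hu.contDiff.continuous
  have hw_supp := hψ.hasCompactSupport_truncation_sub
  have hsq := hψ.contDiff_excess_sq hu.contDiff ht
  have hsq_supp := hψ.hasCompactSupport_excess_sq ht
  have hS := measurableSet_noncriticalSet hu.contDiff hψ.contDiff
  have hgrad_int : Integrable fun x ↦ (truncation U (u - ψ) x - t)⁺ * ‖∇ u x - ∇ ψ x‖ := by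
    have := continuous_gradient hu.contDiff
    have := continuous_gradient hψ.contDiff
    exact (by fun_prop : Continuous _).integrable_of_hasCompactSupport
      (hasCompactSupport_posPart_sub hw_supp ht).mul_right
  have hsq_int := hsq.continuous.integrable_of_hasCompactSupport (μ := volume) hsq_supp
  have htest_int := integrable_mul_add_inner_gradient hu.locallyIntegrable_source
    hu.locallyIntegrable_flux hsq hsq_supp
  have hexcess_int := ((integrable_posPart_sub hw hw_supp ht).indicator hS).const_mul
    (energyConst p C₁ C₂ * ρ ^ p)
  have hint := integral_mono_ae ((hgrad_int.const_mul (C₁ * ρ ^ (p - 1))).add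
    (hsq_int.const_mul h)) (htest_int.add hexcess_int) (by
      filter_upwards [hψ.coeff_le, hψ.le_source] with x hbx hax
      exact excess_energy_density_le hp hα hαp hC₁ hC₂ hu hψ ht hbx hax)
  simp only [Pi.add_apply] at hint
  rw [integral_add (hgrad_int.const_mul _) (hsq_int.const_mul _), integral_const_mul,
    integral_const_mul, integral_add htest_int hexcess_int, integral_const_mul,
    integral_indicator hS] at hint
  linarith [hu.integral_nonpos _ hsq hsq_supp fun x ↦ sq_nonneg _]

lemma integral_sq_truncation_le (hp : 1 ≤ p) (hα : 0 < α) (hαp : α ≤ p) (hC₁ : 0 < C₁)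
    (hC₂ : 0 < C₂) (hu : IsSubsolution p α C₁ C₂ Z b a u)
    (hψ : IsBarrier p α C₁ b a u U ψ ρ W B h) :
    h * ∫ x, truncation U (u - ψ) x ^ 2 ≤
      energyConst p C₁ C₂ * ρ ^ p * ∫ x in noncriticalSet u ψ, truncation U (u - ψ) x := by
  have henergy := excess_energy_le hp hα hαp hC₁ hC₂ hu hψ le_rfl
  simp only [sub_zero, posPart_of_nonneg truncation_nonneg] at henergy
  refine (le_add_of_nonneg_left ?_).trans henergy
  have := hψ.slope_pos
  exact mul_nonneg (by positivity)
    (integral_nonneg fun x ↦ mul_nonneg truncation_nonneg (norm_nonneg _))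

lemma integral_norm_fderiv_excess_sq_le (hp : 1 ≤ p) (hα : 0 < α) (hαp : α ≤ p) (hC₁ : 0 < C₁)
    (hC₂ : 0 < C₂) (hh : 0 ≤ h) (hu : IsSubsolution p α C₁ C₂ Z b a u)
    (hψ : IsBarrier p α C₁ b a u U ψ ρ W B h) {t : ℝ} (ht : 0 ≤ t) :
    ∫ x, ‖fderiv ℝ (fun x ↦ (truncation U (u - ψ) x - t)⁺ ^ 2) x‖ ≤
      2 * energyConst p C₁ C₂ / C₁ * ρ *
        ∫ x in noncriticalSet u ψ, (truncation U (u - ψ) x - t)⁺ := by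
  have hρ := hψ.slope_pos
  have hnorm (x : E) : ‖fderiv ℝ (fun x ↦ (truncation U (u - ψ) x - t)⁺ ^ 2) x‖ =
      2 * ((truncation U (u - ψ) x - t)⁺ * ‖∇ u x - ∇ ψ x‖) := by
    rw [← norm_gradient, hψ.gradient_excess_sq hu.contDiff ht, norm_smul,
      Real.norm_of_nonneg (by positivity), mul_assoc]
  have henergy := excess_energy_le hp hα hαp hC₁ hC₂ hu hψ ht
  have hsq : 0 ≤ h * ∫ x, (truncation U (u - ψ) x - t)⁺ ^ 2 :=
    mul_nonneg hh (integral_nonneg fun x ↦ sq_nonneg _)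
  have hK := energyConst_pos (p := p) hC₁ hC₂
  rw [← mul_rpow_sub_one (p := p) (x := ρ) (by linarith) hρ.le] at henergy
  simp only [hnorm]
  rw [integral_const_mul]
  refine le_of_mul_le_mul_left ?_ (by positivity : 0 < C₁ * ρ ^ (p - 1))
  calc _ = 2 * (C₁ * ρ ^ (p - 1) * ∫ x, (truncation U (u - ψ) x - t)⁺ * ‖∇ u x - ∇ ψ x‖) := by
        ring
    _ ≤ 2 * (energyConst p C₁ C₂ * (ρ * ρ ^ (p - 1)) *
        ∫ x in noncriticalSet u ψ, (truncation U (u - ψ) x - t)⁺) := by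
      gcongr 2 * ?_
      exact (le_add_of_nonneg_right hsq).trans henergy
    _ = _ := by field_simp

theorem exists_truncation_le_of_integral_excess_le (hE : 2 ≤ Module.finrank ℝ E) (hp : 1 ≤ p)
    (hα : 0 < α) (hαp : α ≤ p) (hC₁ : 0 < C₁) (hC₂ : 0 < C₂) :
    ∃ c, 0 < c ∧ ∀ {Z : E → E} {b a u ψ : E → ℝ} {U : Set E} {ρ W B h : ℝ}, 0 ≤ h →
      IsSubsolution p α C₁ C₂ Z b a u → IsBarrier p α C₁ b a u U ψ ρ W B h →
      ∀ t V, 0 ≤ t → 0 < V →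
        ρ ^ Module.finrank ℝ E * ∫ x in noncriticalSet u ψ, (truncation U (u - ψ) x - t)⁺ ≤
          c * V ^ (Module.finrank ℝ E + 1) →
        ∀ x, truncation U (u - ψ) x ≤ t + V := by
  obtain ⟨c, hc, hbound⟩ := exists_deGiorgi_bound E hE
  have hK := energyConst_pos (p := p) hC₁ hC₂
  set Λ := 2 * energyConst p C₁ C₂ / C₁
  have : 0 < Λ := by positivity
  refine ⟨c / Λ ^ Module.finrank ℝ E, by positivity, ?_⟩
  intro Z b a u ψ U ρ W B h hh hu hψ t V ht hV hsmall
  have := hψ.slope_pos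
  refine hbound _ (noncriticalSet u ψ) (Λ * ρ) t V
    (hψ.continuous_truncation_sub hu.contDiff.continuous) hψ.hasCompactSupport_truncation_sub
    (by positivity) ht hV (fun s hs ↦ hψ.contDiff_excess_sq hu.contDiff (ht.trans hs))
    (fun s hs ↦ integral_norm_fderiv_excess_sq_le hp hα hαp hC₁ hC₂ hh hu hψ (ht.trans hs)) ?_
  rw [mul_pow, mul_assoc]
  rwa [div_mul_eq_mul_div, le_div_iff₀' (by positivity)] at hsmall

end Energy

section LocalGrowth

lemma mul_posPart_sub_le_sq {y V : ℝ} (hy : 0 ≤ y) (hV : 0 ≤ V) : V * (y - V)⁺ ≤ y ^ 2 := by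
  rcases le_total y V with hle | hle
  · simpa only [posPart_of_nonpos (sub_nonpos.2 hle), mul_zero] using sq_nonneg y
  · rw [posPart_of_nonneg (sub_nonneg.2 hle)]
    nlinarith [mul_nonneg hV (sub_nonneg.2 hle)]

variable {E : Type*} [NormedAddCommGroup E] {ℓ c δ : ℝ} {z : E}

/-- The paraboloid with vertex `(z, ℓ)` and opening `c`, used as a barrier on balls around `z`. -/
def paraboloid (ℓ c : ℝ) (z : E) (x : E) : ℝ := ℓ + c * ‖x - z‖ ^ 2

lemma le_paraboloid (hc : 0 ≤ c) (x : E) : ℓ ≤ paraboloid ℓ c z x :=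
  le_add_of_nonneg_right (by positivity)

lemma paraboloid_of_mem_sphere {x : E} (hx : x ∈ sphere z δ) :
    paraboloid ℓ c z x = ℓ + c * δ ^ 2 := by
  rw [paraboloid, ← dist_eq_norm, mem_sphere.1 hx]

variable [InnerProductSpace ℝ E]

lemma contDiff_paraboloid : ContDiff ℝ 1 (paraboloid ℓ c z) :=
  contDiff_const.add (contDiff_const.mul ((contDiff_id.sub contDiff_const).norm_sq ℝ))

variable [FiniteDimensional ℝ E]

lemma norm_gradient_paraboloid (hc : 0 ≤ c) (x : E) :
    ‖∇ (paraboloid ℓ c z) x‖ = 2 * (c * ‖x - z‖) := by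
  have hderiv : HasFDerivAt (paraboloid ℓ c z) (c • (2 • innerSL ℝ (x - z))) x :=
    (((hasFDerivAt_id (𝕜 := ℝ) x).sub_const z).norm_sq.const_mul c).const_add ℓ
  rw [norm_gradient, hderiv.fderiv, norm_smul, ← Nat.cast_smul_eq_nsmul ℝ, norm_smul,
    innerSL_apply_norm, Real.norm_of_nonneg hc, Nat.cast_ofNat, Real.norm_ofNat]
  ring

variable [MeasurableSpace E] [BorelSpace E] {w v b a u : E → ℝ} {S T U : Set E}
  {p α C₁ C₂ W V B h κ : ℝ}

lemma isBarrier_paraboloid (hδ : 0 < δ) (hW : 0 < W) (hB : 0 ≤ B)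
    (hb : ∀ᵐ x, x ∈ ball z δ → b x ≤ B) (ha : ∀ᵐ x, x ∈ ball z δ → ℓ < u x → h ≤ a x)
    (hu : ∀ x ∈ closedBall z δ, u x ≤ ℓ + W) (hcoupling : B * W ≤ C₁ / 2 * (W / δ) ^ (p - α)) :
    IsBarrier p α C₁ b a u (ball z δ) (paraboloid ℓ (W / δ ^ 2) z) (W / δ) W B h where
  isOpen := isOpen_ball
  isBounded := isBounded_ball
  contDiff := contDiff_paraboloid
  le_of_mem_frontier x hx := by
    rw [frontier_ball z hδ.ne'] at hx
    rw [paraboloid_of_mem_sphere hx, div_mul_cancel₀ W (by positivity)]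
    exact hu x (sphere_subset_closedBall hx)
  sub_le x hx := by
    linarith [hu x (ball_subset_closedBall hx), le_paraboloid (ℓ := ℓ) (z := z)
      (by positivity : 0 ≤ W / δ ^ 2) x]
  slope_pos := by positivity
  norm_gradient_le x hx := by
    rw [norm_gradient_paraboloid (by positivity)]
    calc 2 * (W / δ ^ 2 * ‖x - z‖) ≤ 2 * (W / δ ^ 2 * δ) := by
          gcongr
          exact (mem_ball_iff_norm.1 hx).le
      _ = _ := by field_simp
  height_nonneg := hW.le
  coeff_nonneg := hB
  coeff_le := hb
  le_source := by
    filter_upwards [ha] with x hax hx hlt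
    exact hax hx ((le_paraboloid (by positivity) x).trans_lt hlt)
  coupling := hcoupling

lemma mul_setIntegral_posPart_sub_le (hw : Continuous w) (hw_supp : HasCompactSupport w)
    (hw_nonneg : ∀ x, 0 ≤ w x) (hV : 0 ≤ V) :
    V * ∫ x in S, (w x - V)⁺ ≤ ∫ x, w x ^ 2 := by
  have hint := integrable_posPart_sub hw hw_supp hV
  have hsq_supp : HasCompactSupport fun x ↦ w x ^ 2 :=
    hw_supp.comp_left (g := fun y : ℝ ↦ y ^ 2) (by simp)
  have hint_sq : Integrable fun x ↦ w x ^ 2 :=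
    (by fun_prop : Continuous fun x ↦ w x ^ 2).integrable_of_hasCompactSupport hsq_supp
  calc V * ∫ x in S, (w x - V)⁺ ≤ V * ∫ x, (w x - V)⁺ := by
        gcongr V * ?_
        exact setIntegral_le_integral hint (.of_forall fun x ↦ posPart_nonneg _)
    _ = ∫ x, V * (w x - V)⁺ := by rw [integral_const_mul]
    _ ≤ ∫ x, w x ^ 2 :=
      integral_mono (hint.const_mul V) hint_sq fun x ↦ mul_posPart_sub_le_sq (hw_nonneg x) hV

lemma setIntegral_truncation_le (hS : MeasurableSet S) (hT : MeasurableSet T)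
    (hT_fin : volume T ≠ ∞) (hsub : ∀ x ∈ S, x ∈ U → 0 < v x → x ∈ T)
    (hint : Integrable (truncation U v)) (hW : 0 ≤ W) (hv : ∀ x ∈ U, v x ≤ W) :
    ∫ x in S, truncation U v x ≤ W * volume.real T := by
  have hint_T : Integrable (T.indicator fun _ ↦ W) :=
    (integrable_indicator_iff hT).2 (integrableOn_const hT_fin)
  calc ∫ x in S, truncation U v x ≤ ∫ x in S, T.indicator (fun _ ↦ W) x := by
        refine setIntegral_mono_on hint.integrableOn hint_T.integrableOn hS fun x hxS ↦ ?_
        rcases (truncation_nonneg : 0 ≤ truncation U v x).eq_or_lt with h0 | hpos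
        · exact h0.symm.trans_le (indicator_nonneg (fun _ _ ↦ hW) x)
        · have hxU := mem_of_truncation_pos hpos
          have hvx := truncation_eq_of_pos hpos
          rw [hvx, indicator_of_mem (hsub x hxS hxU (hvx ▸ hpos))]
          exact hv x hxU
    _ ≤ ∫ x, T.indicator (fun _ ↦ W) x :=
      setIntegral_le_integral hint_T (.of_forall fun x ↦ indicator_nonneg (fun _ _ ↦ hW) x)
    _ = W * volume.real T := by
      rw [integral_indicator hT, setIntegral_const, smul_eq_mul, mul_comm]

lemma mul_rpow_le_of_sq_mass_le {d : ℕ} {I K ω : ℝ} (hκ : 0 < κ) (hc : 0 < c) (hδ : 0 < δ)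
    (hW : 0 < W) (hh : 0 ≤ h)
    (hlarge : c * (κ * W) ^ (d + 1) ≤ (W / δ) ^ d * I)
    (hmass : h * (κ * W * I) ≤ K * (W / δ) ^ p * (W * (δ ^ d * ω))) :
    h * δ ^ p ≤ K * ω / (c * κ ^ (d + 2)) * W ^ (p - 1) := by
  have hI : c * κ ^ (d + 1) * W * δ ^ d ≤ I := by
    refine le_of_mul_le_mul_left (le_trans (le_of_eq ?_) hlarge) (by positivity : 0 < (W / δ) ^ d)
    rw [div_pow]
    field_simp
    ring
  have hscale : (W / δ) ^ p = W * W ^ (p - 1) / δ ^ p := by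
    rw [Real.div_rpow hW.le hδ.le, Real.rpow_sub_one hW.ne', mul_div_cancel₀ _ hW.ne']
  rw [hscale] at hmass
  rw [div_mul_eq_mul_div, le_div_iff₀ (by positivity)]
  refine le_of_mul_le_mul_right ?_ (by positivity : 0 < W ^ 2 * δ ^ d / δ ^ p)
  calc h * δ ^ p * (c * κ ^ (d + 2)) * (W ^ 2 * δ ^ d / δ ^ p)
      = h * (κ * W * (c * κ ^ (d + 1) * W * δ ^ d)) := by
        field_simp
        ring
    _ ≤ h * (κ * W * I) := by gcongr
    _ ≤ _ := hmass
    _ = _ := by field_simp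

theorem exists_source_bound_of_growth_ball (hE : 2 ≤ Module.finrank ℝ E) (hp : 1 ≤ p) (hα : 0 < α)
    (hαp : α ≤ p) (hC₁ : 0 < C₁) (hC₂ : 0 < C₂) (hκ : 0 < κ) :
    ∃ K, 0 < K ∧ ∀ {Z : E → E} {b a u : E → ℝ} {z : E} {δ W ℓ B h : ℝ},
      IsSubsolution p α C₁ C₂ Z b a u → 0 < δ → 0 < W → 0 ≤ B → 0 ≤ h →
      (∀ᵐ x, x ∈ ball z δ → b x ≤ B) → (∀ᵐ x, x ∈ ball z δ → ℓ < u x → h ≤ a x) →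
      (∀ x ∈ closedBall z δ, u x ≤ ℓ + W) → ℓ + κ * W ≤ u z →
      B * W ≤ C₁ / 2 * (W / δ) ^ (p - α) → h * δ ^ p ≤ K * W ^ (p - 1) := by
  obtain ⟨c, hc, hsup⟩ := exists_truncation_le_of_integral_excess_le hE hp hα hαp hC₁ hC₂
  have hK := energyConst_pos (p := p) hC₁ hC₂
  have hω : 0 < volume.real (ball (0 : E) 1) :=
    ENNReal.toReal_pos (measure_ball_pos volume 0 one_pos).ne' measure_ball_lt_top.ne
  refine ⟨energyConst p C₁ C₂ * volume.real (ball (0 : E) 1) /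
    (c * (κ / 3) ^ (Module.finrank ℝ E + 2)), by positivity, ?_⟩
  intro Z b a u z δ W ℓ B h hu hδ hW hB hh hb ha hu_le hu_z hcoupling
  have hψ := isBarrier_paraboloid hδ hW hB hb ha hu_le hcoupling
  set w := truncation (ball z δ) (u - paraboloid ℓ (W / δ ^ 2) z)
  have hw : Continuous w := hψ.continuous_truncation_sub hu.contDiff.continuous
  have hw_supp : HasCompactSupport w := hψ.hasCompactSupport_truncation_sub
  have hw_z : κ * W ≤ w z := by
    rw [show w z = _ from truncation_of_mem (mem_ball_self hδ)]
    refine le_trans ?_ (le_posPart _)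
    simp only [Pi.sub_apply, paraboloid, sub_self, norm_zero]
    linarith
  set V := κ / 3 * W with hV_def
  have hV : 0 < V := by positivity
  -- Otherwise the De Giorgi bound gives `w z ≤ 2 * V < κ * W`.
  have hlarge : c * V ^ (Module.finrank ℝ E + 1) ≤
      (W / δ) ^ Module.finrank ℝ E *
        ∫ x in noncriticalSet u (paraboloid ℓ (W / δ ^ 2) z), (w x - V)⁺ := by
    by_contra! hsmall
    linarith [hsup hh hu hψ V V hV.le hV hsmall.le z]
  refine mul_rpow_le_of_sq_mass_le (by positivity) hc hδ hW hh hlarge ?_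
  calc h * (V * ∫ x in noncriticalSet u (paraboloid ℓ (W / δ ^ 2) z), (w x - V)⁺)
      ≤ h * ∫ x, w x ^ 2 := by
        gcongr
        exact mul_setIntegral_posPart_sub_le hw hw_supp (fun x ↦ truncation_nonneg) hV.le
    _ ≤ _ := integral_sq_truncation_le hp hα hαp hC₁ hC₂ hu hψ
    _ ≤ _ := by
      gcongr
      refine (setIntegral_truncation_le (measurableSet_noncriticalSet hu.contDiff hψ.contDiff)
        measurableSet_ball measure_ball_lt_top.ne (fun _ _ hx _ ↦ hx)
        (hw.integrable_of_hasCompactSupport hw_supp) hW.le hψ.sub_le).trans_eq ?_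
      rw [measureReal_def, Measure.addHaar_ball_of_pos volume z hδ, ENNReal.toReal_mul,
        ENNReal.toReal_ofReal (by positivity), measureReal_def]

end LocalGrowth

section MaximumPrinciple

lemma mul_le_mul_rpow_div {B C₁ W δ s : ℝ} (hδ : 0 < δ) (hW : 0 ≤ W) (hWδ : W ≤ δ)
    (hBδ : B * δ ≤ C₁ / 2) (hC₁ : 0 ≤ C₁) (hs : s ≤ 1) :
    B * W ≤ C₁ / 2 * (W / δ) ^ s :=
  calc B * W = B * δ * (W / δ) := by field_simp
    _ ≤ C₁ / 2 * (W / δ) := by gcongr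
    _ ≤ C₁ / 2 * (W / δ) ^ s := by
      gcongr
      exact Real.self_le_rpow_of_le_one (by positivity) ((div_le_one hδ).2 hWδ) hs

variable {E : Type*} [NormedAddCommGroup E] [InnerProductSpace ℝ E] [FiniteDimensional ℝ E]
  {Z : E → E} {b a u : E → ℝ} {U : Set E}
  {p α C₁ C₂ m W δ B : ℝ}

lemma noncriticalSet_const (k : ℝ) : noncriticalSet u (fun _ ↦ k) = {x | ∇ u x ≠ 0} := by
  simp [noncriticalSet, gradient]

variable [MeasurableSpace E] [BorelSpace E]

-- The intersection of these sets is empty, since interior maximum points are critical.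
lemma tendsto_measure_noncritical_superlevel (hu : ContDiff ℝ 1 u) (hU : IsOpen U)
    (hU_bdd : Bornology.IsBounded U) (hm : ∀ x ∈ U, u x ≤ m) :
    Tendsto (fun ε ↦ volume (U ∩ {x | ∇ u x ≠ 0} ∩ {x | m - ε < u x})) (𝓝[>] (0 : ℝ)) (𝓝 0) := by
  have hopen (ε : ℝ) : IsOpen (U ∩ {x | ∇ u x ≠ 0} ∩ {x | m - ε < u x}) :=
    (hU.inter (isOpen_ne_fun (continuous_gradient hu) continuous_const)).inter
      (isOpen_lt continuous_const hu.continuous)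
  have hempty : ⋂ ε > (0 : ℝ), U ∩ {x | ∇ u x ≠ 0} ∩ {x | m - ε < u x} = ∅ := by
    refine eq_empty_of_forall_notMem fun x hx ↦ ?_
    rw [mem_iInter₂] at hx
    obtain ⟨hxU, hx_crit⟩ := (hx 1 one_pos).1
    have hmx : m ≤ u x :=
      le_of_forall_pos_le_add fun ε hε ↦ sub_le_iff_le_add.1 (le_of_lt (hx ε hε).2)
    have hmax : IsLocalMax u x := by
      filter_upwards [hU.mem_nhds hxU] with y hy using (hm y hy).trans hmx
    exact hx_crit (by rw [gradient, hmax.fderiv_eq_zero, map_zero])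
  have hlim := tendsto_measure_biInter_gt (μ := volume) (a := (0 : ℝ))
    (fun ε _ ↦ (hopen ε).measurableSet.nullMeasurableSet)
    (fun ε ε' _ hle ↦ inter_subset_inter_right _ fun x (hx : m - ε < u x) ↦
      (sub_le_sub_left hle m).trans_lt hx)
    ⟨1, one_pos, ((measure_mono fun x hx ↦ hx.1.1).trans_lt hU_bdd.measure_lt_top).ne⟩
  rwa [hempty, measure_empty] at hlim

lemma isBarrier_const (hU : IsOpen U) (hU_bdd : Bornology.IsBounded U) (hW : 0 < W) (hδ : 0 < δ)
    (hWδ : W ≤ δ) (hB : 0 ≤ B) (hBδ : B * δ ≤ C₁ / 2) (hC₁ : 0 ≤ C₁) (hα : p - 1 ≤ α)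
    (hfr : ∀ x ∈ frontier U, u x ≤ m - W) (hm : ∀ x ∈ U, u x ≤ m)
    (hb : ∀ᵐ x, x ∈ U → b x ≤ B) (ha : ∀ᵐ x, x ∈ U → 0 ≤ a x) :
    IsBarrier p α C₁ b a u U (fun _ ↦ m - W) (W / δ) W B 0 where
  isOpen := hU
  isBounded := hU_bdd
  contDiff := contDiff_const
  le_of_mem_frontier := hfr
  sub_le x hx := by linarith [hm x hx]
  slope_pos := by positivity
  norm_gradient_le x _ := by
    rw [norm_gradient, fderiv_fun_const, Pi.zero_apply, norm_zero]
    positivity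
  height_nonneg := hW.le
  coeff_nonneg := hB
  coeff_le := hb
  le_source := ha.mono fun _ hx hxU _ ↦ hx hxU
  coupling := mul_le_mul_rpow_div hδ hW.le hWδ hBδ hC₁ (by linarith)

lemma setIntegral_truncation_sub_const_le (hu : ContDiff ℝ 1 u) (hU : IsOpen U)
    (hU_bdd : Bornology.IsBounded U) (hW : 0 ≤ W) (hfr : ∀ x ∈ frontier U, u x ≤ m - W)
    (hm : ∀ x ∈ U, u x ≤ m) :
    ∫ x in {x | ∇ u x ≠ 0}, truncation U (u - fun _ ↦ m - W) x ≤
      W * volume.real (U ∩ {x | ∇ u x ≠ 0} ∩ {x | m - W < u x}) := by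
  have hcrit : IsOpen {x | ∇ u x ≠ 0} := isOpen_ne_fun (continuous_gradient hu) continuous_const
  have hsuper : IsOpen {x | m - W < u x} := isOpen_lt continuous_const hu.continuous
  refine setIntegral_truncation_le hcrit.measurableSet ((hU.inter hcrit).inter hsuper).measurableSet
    ((measure_mono fun x hx ↦ hx.1.1).trans_lt hU_bdd.measure_lt_top).ne
    (fun x hx hxU hpos ↦ ⟨⟨hxU, hx⟩, sub_pos.1 hpos⟩) ?_ hW fun x hx ↦ ?_
  · exact (continuous_truncation (hu.continuous.sub continuous_const)
      fun x hx ↦ sub_nonpos.2 (hfr x hx)).integrable_of_hasCompactSupport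
        (hasCompactSupport_truncation hU_bdd)
  · rw [Pi.sub_apply]
    linarith [hm x hx]

lemma IsSubsolution.le_of_mem_of_isMaxOn (hE : 2 ≤ Module.finrank ℝ E) (hp : 1 ≤ p)
    (hα₀ : 0 < α) (hα : p - 1 ≤ α) (hαp : α ≤ p) (hC₁ : 0 < C₁) (hC₂ : 0 < C₂)
    (hu : IsSubsolution p α C₁ C₂ Z b a u) (hU : IsOpen U) (hU_bdd : Bornology.IsBounded U)
    (hB : 0 ≤ B) (hb : ∀ᵐ x, x ∈ U → b x ≤ B) (ha : ∀ᵐ x, x ∈ U → 0 ≤ a x) {M : ℝ}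
    (hfr : ∀ x ∈ frontier U, u x ≤ M) {x₀ : E} (hx₀ : x₀ ∈ U) (hmax : IsMaxOn u U x₀) :
    u x₀ ≤ M := by
  by_contra! hM
  obtain ⟨c, hc, hsup⟩ := exists_truncation_le_of_integral_excess_le hE hp hα₀ hαp hC₁ hC₂
  set d := Module.finrank ℝ E
  obtain ⟨δ, hδ, hBδ⟩ : ∃ δ > 0, B * δ ≤ C₁ / 2 := by
    refine ⟨C₁ / 2 / (B + 1), by positivity, ?_⟩
    rw [mul_div_left_comm]
    exact mul_le_of_le_one_right (by positivity) ((div_le_one (by positivity)).2 (by linarith))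
  have hsmall := (tendsto_measure_noncritical_superlevel hu.contDiff hU hU_bdd hmax).eventually
    (gt_mem_nhds (ENNReal.ofReal_pos.2 (by positivity : 0 < c * δ ^ d / 2 ^ (d + 1))))
  obtain ⟨W, hW_vol, hWM, hWδ, hW : 0 < W⟩ := (hsmall.and <|
    ((gt_mem_nhds (sub_pos.2 hM)).filter_mono nhdsWithin_le_nhds).and <|
    ((gt_mem_nhds hδ).filter_mono nhdsWithin_le_nhds).and self_mem_nhdsWithin).exists
  have hfrW : ∀ y ∈ frontier U, u y ≤ u x₀ - W := fun y hy ↦ by linarith [hfr y hy]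
  have hψ := isBarrier_const hU hU_bdd hW hδ hWδ.le hB hBδ hC₁.le hα hfrW hmax hb ha
  have hle := hsup le_rfl hu hψ 0 (W / 2) le_rfl (by positivity) (by
    simp only [sub_zero, posPart_of_nonneg truncation_nonneg, noncriticalSet_const]
    calc (W / δ) ^ d * ∫ x in {x | ∇ u x ≠ 0}, truncation U (u - fun _ ↦ u x₀ - W) x
        ≤ (W / δ) ^ d * (W * (c * δ ^ d / 2 ^ (d + 1))) := by
          gcongr (W / δ) ^ d * ?_
          refine (setIntegral_truncation_sub_const_le hu.contDiff hU hU_bdd hW.le hfrW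
            hmax).trans ?_
          gcongr
          exact ENNReal.toReal_le_of_le_ofReal (by positivity) hW_vol.le
      _ = c * (W / 2) ^ (d + 1) := by
        rw [div_pow, div_pow, pow_succ W]
        field_simp) x₀
  rw [truncation_of_mem hx₀, Pi.sub_apply, sub_sub_cancel, posPart_of_nonneg hW.le] at hle
  linarith

theorem IsSubsolution.le_of_forall_mem_frontier_le (hE : 2 ≤ Module.finrank ℝ E) (hp : 1 ≤ p)
    (hα₀ : 0 < α) (hα : p - 1 ≤ α) (hαp : α ≤ p) (hC₁ : 0 < C₁) (hC₂ : 0 < C₂)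
    (hu : IsSubsolution p α C₁ C₂ Z b a u) (hU : IsOpen U) (hU_bdd : Bornology.IsBounded U)
    (hB : 0 ≤ B) (hb : ∀ᵐ x, x ∈ U → b x ≤ B) (ha : ∀ᵐ x, x ∈ U → 0 ≤ a x) {M : ℝ}
    (hfr : ∀ x ∈ frontier U, u x ≤ M) {x : E} (hx : x ∈ closure U) : u x ≤ M := by
  obtain ⟨x₀, hx₀, hmax⟩ := hU_bdd.isCompact_closure.exists_isMaxOn ⟨x, hx⟩
    hu.contDiff.continuous.continuousOn
  refine (hmax hx).trans ?_
  by_cases hx₀U : x₀ ∈ U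
  · exact hu.le_of_mem_of_isMaxOn hE hp hα₀ hα hαp hC₁ hC₂ hU hU_bdd hB hb ha hfr hx₀U
      (hmax.on_subset subset_closure)
  · exact hfr x₀ ⟨hx₀, by rwa [hU.interior_eq]⟩

end MaximumPrinciple

section SphericalMaximum

lemma exists_sub_le_div (f : ℝ → ℝ) (s d : ℝ) {N : ℕ} (hN : N ≠ 0) :
    ∃ j < N, f (s + j * d + d) - f (s + j * d) ≤ (f (s + N * d) - f s) / N := by
  have hsum : ∑ j ∈ Finset.range N, (f (s + j * d + d) - f (s + j * d)) = f (s + N * d) - f s := by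
    simpa [add_mul, add_assoc] using Finset.sum_range_sub (fun j : ℕ ↦ f (s + j * d)) N
  obtain ⟨j, hj, hle⟩ := Finset.exists_le_of_sum_le (g := fun _ ↦ (f (s + N * d) - f s) / N)
    (Finset.nonempty_range_iff.2 hN) (hsum.trans (by
      rw [Finset.sum_const, Finset.card_range, nsmul_eq_mul]
      field_simp)).le
  exact ⟨j, Finset.mem_range.1 hj, hle⟩

variable {n : ℕ} {u : Euc n → ℝ} {r s t : ℝ}

lemma le_sphMax (hu : Continuous u) (x : Euc n) : u x ≤ sphMax u ‖x‖ :=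
  le_csSup ((isCompact_sphere 0 ‖x‖).image hu).bddAbove
    (mem_image_of_mem u (mem_sphere_zero_iff_norm.2 rfl))

lemma exists_norm_eq_sphMax_eq [NeZero n] (hu : Continuous u) (hr : 0 ≤ r) :
    ∃ x, ‖x‖ = r ∧ u x = sphMax u r := by
  have hne : (sphere (0 : Euc n) r).Nonempty := NormedSpace.sphere_nonempty.2 hr
  obtain ⟨x, hx, hux⟩ := ((isCompact_sphere 0 r).image hu).sSup_mem (hne.image u)
  exact ⟨x, mem_sphere_zero_iff_norm.1 hx, hux⟩

lemma continuousOn_sphMax [NeZero n] (hu : Continuous u) : ContinuousOn (sphMax u) (Ici 0) := by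
  have hcont : Continuous fun r : ℝ ↦ sSup ((fun y ↦ u (r • y)) '' sphere (0 : Euc n) 1) :=
    (isCompact_sphere 0 1).continuous_sSup (by fun_prop)
  refine hcont.continuousOn.congr fun r hr ↦ ?_
  have hsphere : (fun y ↦ r • y) '' sphere (0 : Euc n) 1 = sphere 0 r := by
    rw [image_smul, smul_sphere r 0 zero_le_one, smul_zero, mul_one, Real.norm_of_nonneg hr]
  rw [sphMax, ← hsphere, image_image]

lemma monotoneOn_sphMax [NeZero n] (hu : Continuous u)
    (hmax : ∀ r > 0, ∀ x, ‖x‖ ≤ r → u x ≤ sphMax u r) : MonotoneOn (sphMax u) (Ioi 0) := by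
  intro s hs t ht hst
  obtain ⟨x, hx, hux⟩ := exists_norm_eq_sphMax_eq hu (le_of_lt hs)
  exact hux ▸ hmax t ht x (hx.trans_le hst)

variable {p α C₁ C₂ κ : ℝ}

theorem IsSubsolution.le_sphMax_of_norm_le {Z : Euc n → Euc n} {b a : Euc n → ℝ} (hn : 2 ≤ n)
    (hp : 1 ≤ p) (hα₀ : 0 < α) (hα : p - 1 ≤ α) (hαp : α ≤ p) (hC₁ : 0 < C₁) (hC₂ : 0 < C₂)
    (hu : IsSubsolution p α C₁ C₂ Z b a u) (hb : LocBdd b) (ha : ∀ x, 0 ≤ a x) (hr : 0 < r)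
    {x : Euc n} (hx : ‖x‖ ≤ r) : u x ≤ sphMax u r := by
  obtain ⟨B, hB⟩ := hb _ (isCompact_closedBall 0 r)
  refine hu.le_of_forall_mem_frontier_le (U := ball 0 r) (by rwa [finrank_euclideanSpace_fin]) hp
    hα₀ hα hαp hC₁ hC₂ isOpen_ball isBounded_ball (le_max_right B 0)
    (.of_forall fun y hy ↦ (hB y (ball_subset_closedBall hy)).trans (le_max_left B 0))
    (.of_forall fun y _ ↦ ha y) (fun y hy ↦ ?_) ?_
  · rw [frontier_ball 0 hr.ne', mem_sphere_zero_iff_norm] at hy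
    exact hy ▸ le_sphMax hu.contDiff.continuous y
  · rwa [closure_ball 0 hr.ne', mem_closedBall_zero_iff]

lemma ball_subset_Ann {z : Euc n} {d : ℝ} (hz : ‖z‖ = r + d / 2) :
    ball z (d / 2) ⊆ Ann n r (r + d) := by
  intro x hx
  rw [mem_ball_iff_norm] at hx
  have hle := norm_sub_norm_le x z
  have hge := norm_sub_norm_le z x
  rw [norm_sub_rev] at hge
  constructor <;> linarith

lemma exists_source_bound_of_growth_annulus (hn : 2 ≤ n) (hp : 1 ≤ p) (hα : 0 < α) (hαp : α ≤ p)
    (hC₁ : 0 < C₁) (hC₂ : 0 < C₂) (hκ : 0 < κ) (hκ1 : κ ≤ 1) :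
    ∃ K, 0 < K ∧ ∀ {Z : Euc n → Euc n} {b a u : Euc n → ℝ} {r d ω B H : ℝ},
      IsSubsolution p α C₁ C₂ Z b a u → (∀ r > 0, ∀ x, ‖x‖ ≤ r → u x ≤ sphMax u r) →
      0 < r → 0 < d → 0 < ω → 0 ≤ B → 0 ≤ H →
      (∀ᵐ x, x ∈ Ann n r (r + d) → b x ≤ B) →
      (∀ᵐ x, x ∈ Ann n r (r + d) → sphMax u r - κ * ω < u x → H ≤ a x) →
      sphMax u (r + d) - sphMax u r ≤ ω → 4 * (B * ω) ≤ C₁ * (ω / d) ^ (p - α) →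
      H * d ^ p ≤ K * ω ^ (p - 1) := by
  have : NeZero n := ⟨by omega⟩
  obtain ⟨K, hK, hball⟩ := exists_source_bound_of_growth_ball (E := Euc n) (κ := κ / (1 + κ))
    (by rwa [finrank_euclideanSpace_fin]) hp hα hαp hC₁ hC₂ (by positivity)
  refine ⟨K * 2 ^ (p - 1) * 2 ^ p, by positivity, ?_⟩
  intro Z b a u r d ω B H hu hmax hr hd hω hB hH hb ha hgrow hcoupling
  have hmono := monotoneOn_sphMax hu.contDiff.continuous hmax
  obtain ⟨z, hz, hzM⟩ := exists_norm_eq_sphMax_eq hu.contDiff.continuous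
    (by positivity : 0 ≤ r + d / 2)
  have hrz : sphMax u r ≤ u z :=
    hzM ▸ hmono hr (mem_Ioi.2 (by positivity)) (by linarith)
  have hsub := ball_subset_Ann hz
  have hW : (1 + κ) * ω ≤ 2 * ω := by gcongr; linarith
  have hωW : ω ≤ (1 + κ) * ω := le_mul_of_one_le_left hω.le (by linarith)
  have hbound := hball (z := z) (δ := d / 2) (W := (1 + κ) * ω) (ℓ := u z - κ * ω) hu
    (by positivity) (by positivity) hB hH (hb.mono fun x hx hxz ↦ hx (hsub hxz))
    (ha.mono fun x hx hxz hlt ↦ hx (hsub hxz) (by linarith))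
    (fun x hx ↦ by
      have hx_norm : ‖x‖ ≤ r + d := by
        linarith [norm_sub_norm_le x z, mem_closedBall_iff_norm.1 hx]
      linarith [hmax (r + d) (by positivity) x hx_norm])
    (by field_simp; linarith)
    (calc B * ((1 + κ) * ω) ≤ B * (2 * ω) := by gcongr
      _ ≤ C₁ / 2 * (ω / d) ^ (p - α) := by linarith
      _ ≤ C₁ / 2 * ((1 + κ) * ω / (d / 2)) ^ (p - α) := by gcongr; linarith)
  rw [Real.div_rpow hd.le two_pos.le, ← mul_div_assoc, div_le_iff₀ (by positivity)] at hbound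
  calc H * d ^ p ≤ K * ((1 + κ) * ω) ^ (p - 1) * 2 ^ p := hbound
    _ ≤ K * (2 * ω) ^ (p - 1) * 2 ^ p := by gcongr
    _ = K * 2 ^ (p - 1) * 2 ^ p * ω ^ (p - 1) := by
      rw [Real.mul_rpow two_pos.le hω.le]
      ring

-- `N` is the number of subannuli needed for the coupling condition to hold on each of them.
lemma le_of_mul_rpow_le_pigeonhole {K V Δ B H : ℝ} (hC₁ : 0 < C₁) (hK : 0 ≤ K) (hV : 0 < V)
    (hΔ : 0 < Δ) (hB : 0 ≤ B)
    (hN : ∀ N : ℕ, N ≠ 0 → 4 * (B * (V * (Δ / N))) ≤ C₁ * V ^ (p - α) →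
      H * (Δ / N) ^ p ≤ K * (V * (Δ / N)) ^ (p - 1)) :
    H ≤ K * (1 + 4 / C₁) * (V ^ (p - 1) / Δ + B * V ^ α) := by
  set y := 4 * (B * (V * Δ)) / (C₁ * V ^ (p - α)) with hy
  set N : ℕ := ⌊y⌋₊ + 1
  have hNy : y ≤ N := by exact_mod_cast (Nat.lt_floor_add_one y).le
  have hNy' : (N : ℝ) ≤ y + 1 := by
    push_cast [N]
    gcongr
    exact Nat.floor_le (by positivity)
  have hN_pos : (0 : ℝ) < N := by positivity
  have hbound := hN N (Nat.succ_ne_zero _) (by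
    rw [hy, div_le_iff₀ (by positivity)] at hNy
    rw [← mul_div_assoc, ← mul_div_assoc, ← mul_div_assoc, div_le_iff₀ hN_pos]
    linarith)
  have hH : H ≤ K * V ^ (p - 1) * (N / Δ) := by
    have hd : 0 < Δ / N := by positivity
    rw [Real.mul_rpow hV.le hd.le, Real.rpow_sub_one hd.ne' p] at hbound
    refine le_of_mul_le_mul_right (hbound.trans_eq ?_) (by positivity : 0 < (Δ / N) ^ p)
    field_simp
  calc H ≤ K * V ^ (p - 1) * (N / Δ) := hH
    _ ≤ K * V ^ (p - 1) * ((y + 1) / Δ) := by gcongr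
    _ = K * (V ^ (p - 1) / Δ + 4 / C₁ * (B * V ^ α)) := by
      rw [hy, show V ^ (p - 1) = V ^ α * V ^ (p - α) / V by
        rw [← Real.rpow_add hV, ← Real.rpow_sub_one hV.ne']; ring_nf]
      field_simp
      ring
    _ ≤ K * (1 + 4 / C₁) * (V ^ (p - 1) / Δ + B * V ^ α) := by
      rw [mul_assoc, one_add_mul, mul_add (4 / C₁)]
      gcongr K * ?_
      have h₁ : 0 ≤ 4 / C₁ * (V ^ (p - 1) / Δ) := by positivity
      have h₂ : 0 ≤ B * V ^ α := by positivity
      linarith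

theorem exists_source_bound_of_growth (hn : 2 ≤ n) (hp : 1 ≤ p) (hα : 0 < α) (hαp : α ≤ p)
    (hC₁ : 0 < C₁) (hC₂ : 0 < C₂) (hκ : 0 < κ) (hκ1 : κ ≤ 1) :
    ∃ K, 0 < K ∧ ∀ {Z : Euc n → Euc n} {b a u : Euc n → ℝ} {s t B H : ℝ},
      IsSubsolution p α C₁ C₂ Z b a u → (∀ r > 0, ∀ x, ‖x‖ ≤ r → u x ≤ sphMax u r) →
      0 < s → s < t → sphMax u s < sphMax u t → 0 ≤ B → 0 ≤ H →
      (∀ᵐ x, x ∈ Ann n s t → b x ≤ B) →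
      (∀ᵐ x, x ∈ Ann n s t → sphMax u s - κ * (sphMax u t - sphMax u s) < u x → H ≤ a x) →
      H ≤ K * (((sphMax u t - sphMax u s) / (t - s)) ^ (p - 1) / (t - s) +
        B * ((sphMax u t - sphMax u s) / (t - s)) ^ α) := by
  have : NeZero n := ⟨by omega⟩
  obtain ⟨K, hK, hthin⟩ := exists_source_bound_of_growth_annulus hn hp hα hαp hC₁ hC₂ hκ hκ1
  refine ⟨K * (1 + 4 / C₁), by positivity, ?_⟩
  intro Z b a u s t B H hu hmax hs hst hM hB hH hb ha
  have hΔ : 0 < t - s := sub_pos.2 hst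
  have hV : 0 < (sphMax u t - sphMax u s) / (t - s) := div_pos (sub_pos.2 hM) hΔ
  refine le_of_mul_rpow_le_pigeonhole hC₁ hK.le hV hΔ hB fun N hN hcoupling ↦ ?_
  have : (0 : ℝ) < N := by positivity
  set d := (t - s) / N with hd
  set ω := (sphMax u t - sphMax u s) / (t - s) * d
  have hω : ω = (sphMax u t - sphMax u s) / N := by
    simp only [ω, hd]
    field_simp
  have hNd : s + N * d = t := by rw [hd]; field_simp; ring
  obtain ⟨j, hjN, hj⟩ := exists_sub_le_div (sphMax u) s d hN
  rw [hNd, ← hω] at hj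
  have hsub : Ann n (s + j * d) (s + j * d + d) ⊆ Ann n s t := by
    have hjd : s + j * d + d ≤ t := by
      rw [← hNd, add_assoc, ← add_one_mul]
      gcongr
      exact_mod_cast hjN
    have hs_le : s ≤ s + j * d := le_add_of_nonneg_right (by positivity)
    exact fun x hx ↦ ⟨hs_le.trans_lt hx.1, hx.2.trans_le hjd⟩
  refine hthin (r := s + j * d) hu hmax (by positivity) (by positivity) (by positivity) hB hH
    (hb.mono fun x hx hxA ↦ hx (hsub hxA)) (ha.mono fun x hx hxA hlt ↦ hx (hsub hxA) ?_) hj ?_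
  · have hmono : sphMax u s ≤ sphMax u (s + j * d) :=
      monotoneOn_sphMax hu.contDiff.continuous hmax hs (mem_Ioi.2 (by positivity))
        (le_add_of_nonneg_right (by positivity))
    have hω_le : κ * ω ≤ κ * (sphMax u t - sphMax u s) := by
      rw [hω]
      gcongr
      exact div_le_self (sub_pos.2 hM).le (by exact_mod_cast Nat.one_le_iff_ne_zero.2 hN)
    linarith
  · rwa [mul_div_cancel_right₀ _ (by positivity)]

end SphericalMaximum

section LocalInfimum

variable {g : ℝ → ℝ} {θ t x y : ℝ}

lemma mem_Ioo_div_mul_self (hθ : 1 < θ) (ht : 0 < t) : t ∈ Ioo (t / θ) (θ * t) :=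
  ⟨div_lt_self ht hθ, lt_mul_of_one_lt_left ht hθ⟩

lemma ginf_le (hθ : 1 < θ) (hg : ∀ s > 0, 0 < g s) (ht : 0 < t)
    (hx : x ∈ Ioo (t / θ) (θ * t)) : ginf g θ t ≤ g x := by
  refine csInf_le ⟨0, ?_⟩ (mem_image_of_mem g hx)
  rintro _ ⟨z, hz, rfl⟩
  exact (hg z ((div_pos ht (by linarith)).trans hz.1)).le

lemma le_ginf {c : ℝ} (hθ : 1 < θ) (ht : 0 < t) (h : ∀ x ∈ Ioo (t / θ) (θ * t), c ≤ g x) :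
    c ≤ ginf g θ t :=
  le_csInf ⟨g t, mem_image_of_mem g (mem_Ioo_div_mul_self hθ ht)⟩ (forall_mem_image.2 h)

lemma exists_pos_le_ginf (hθ : 1 < θ) (hgc : ContinuousOn g (Ioi 0)) (hg : ∀ s > 0, 0 < g s)
    (hx : 0 < x) (hxy : x ≤ y) : ∃ ε, 0 < ε ∧ ∀ t ∈ Icc x y, ε ≤ ginf g θ t := by
  have hθ₀ : 0 < θ := by linarith
  have hxθ : 0 < x / θ := div_pos hx hθ₀
  have hle : x / θ ≤ θ * y := (div_le_self hx.le hθ.le).trans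
    (hxy.trans (le_mul_of_one_le_left (hx.le.trans hxy) hθ.le))
  obtain ⟨z, hz, hmin⟩ := isCompact_Icc.exists_isMinOn (nonempty_Icc.2 hle)
    (hgc.mono fun s hs ↦ hxθ.trans_le hs.1)
  refine ⟨g z, hg z (hxθ.trans_le hz.1), fun t ht ↦ le_ginf hθ (hx.trans_le ht.1) fun s hs ↦
    hmin ⟨le_trans ?_ hs.1.le, hs.2.le.trans ?_⟩⟩
  · exact div_le_div_of_nonneg_right ht.1 hθ₀.le
  · exact mul_le_mul_of_nonneg_left ht.2 hθ₀.le

lemma upperSemicontinuousOn_ginf (hθ : 1 < θ) (hg : ∀ s > 0, 0 < g s) :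
    UpperSemicontinuousOn (ginf g θ) (Ioi 0) := by
  intro t ht c hc
  obtain ⟨_, ⟨x, hx, rfl⟩, hxc⟩ :=
    exists_lt_of_csInf_lt ⟨g t, mem_image_of_mem g (mem_Ioo_div_mul_self hθ ht)⟩ hc
  have hleft : ∀ᶠ s in 𝓝 t, s / θ < x :=
    (continuous_id.div_const θ).continuousAt.eventually_lt continuousAt_const hx.1
  have hright : ∀ᶠ s in 𝓝 t, x < θ * s :=
    continuousAt_const.eventually_lt (continuous_const_mul θ).continuousAt hx.2
  filter_upwards [(hleft.and hright).filter_mono nhdsWithin_le_nhds, self_mem_nhdsWithin]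
    with s hs hs₀
  exact (ginf_le hθ hg hs₀ hs).trans_lt hxc

lemma aemeasurable_ginf (hθ : 1 < θ) (hg : ∀ s > 0, 0 < g s) :
    AEMeasurable (ginf g θ) (volume.restrict (Ioi 0)) :=
  aemeasurable_restrict_of_measurable_subtype measurableSet_Ioi
    (upperSemicontinuousOn_iff_restrict.2 (upperSemicontinuousOn_ginf hθ hg)).measurable

lemma integrableOn_rpow_of_forall_le {X : Type*} [MeasurableSpace X] {μ : Measure X} {S : Set X}
    {f : X → ℝ} {ε e : ℝ} (hS : MeasurableSet S) (hμ : μ S ≠ ∞)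
    (hf : AEMeasurable f (μ.restrict S)) (hε : 0 < ε) (hle : ∀ x ∈ S, ε ≤ f x) (he : e ≤ 0) :
    IntegrableOn (fun x ↦ f x ^ e) S μ := by
  have : IsFiniteMeasure (μ.restrict S) := isFiniteMeasure_restrict.2 hμ
  refine Integrable.of_bound (hf.pow_const e).aestronglyMeasurable (ε ^ e) ?_
  filter_upwards [ae_restrict_mem hS] with x hx
  rw [Real.norm_of_nonneg (Real.rpow_nonneg (hε.le.trans (hle x hx)) e)]
  exact Real.rpow_le_rpow_of_nonpos hε (hle x hx) he

lemma intervalIntegrable_ginf_rpow {e : ℝ} (hθ : 1 < θ) (hgc : ContinuousOn g (Ioi 0))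
    (hg : ∀ s > 0, 0 < g s) (hx : 0 < x) (hxy : x ≤ y) (he : e ≤ 0) :
    IntervalIntegrable (fun t ↦ ginf g θ t ^ e) volume x y := by
  obtain ⟨ε, hε, hle⟩ := exists_pos_le_ginf hθ hgc hg hx hxy
  rw [intervalIntegrable_iff_integrableOn_Ioc_of_le hxy]
  exact integrableOn_rpow_of_forall_le measurableSet_Ioc measure_Ioc_lt_top.ne
    ((aemeasurable_ginf hθ hg).mono_set fun t ht ↦ hx.trans ht.1) hε
    (fun t ht ↦ hle t (Ioc_subset_Icc_self ht)) he

lemma intervalIntegrable_ginf_mul_rpow {e : ℝ} (hθ : 1 < θ) (hgc : ContinuousOn g (Ioi 0))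
    (hg : ∀ s > 0, 0 < g s) (hx : 0 < x) (hxy : x ≤ y) (he : e ≤ 0) :
    IntervalIntegrable (fun t ↦ (ginf g θ t * t) ^ e) volume x y := by
  obtain ⟨ε, hε, hle⟩ := exists_pos_le_ginf hθ hgc hg hx hxy
  rw [intervalIntegrable_iff_integrableOn_Ioc_of_le hxy]
  refine integrableOn_rpow_of_forall_le measurableSet_Ioc measure_Ioc_lt_top.ne
    (((aemeasurable_ginf hθ hg).mono_set fun t ht ↦ hx.trans ht.1).mul aemeasurable_id)
    (mul_pos hε hx) (fun t ht ↦ ?_) he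
  exact mul_le_mul (hle t (Ioc_subset_Icc_self ht)) ht.1.le hx.le
    (hε.le.trans (hle t (Ioc_subset_Icc_self ht)))

lemma setIntegral_ginf_mul_rpow_nonneg {e : ℝ} (hθ : 1 < θ) (hg : ∀ s > 0, 0 < g s)
    (hx : 0 < x) : 0 ≤ ∫ t in Ioc x y, (ginf g θ t * t) ^ e := by
  refine setIntegral_nonneg measurableSet_Ioc fun t ht ↦ ?_
  have ht₀ : 0 < t := hx.trans ht.1
  have hginf : 0 ≤ ginf g θ t := le_ginf hθ ht₀ fun s hs ↦
    (hg s ((div_pos ht₀ (one_pos.trans hθ)).trans hs.1)).le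
  positivity

end LocalInfimum

section GrowthWeight

/-- The integrand `Q^{-1/p} (g_η(t) t)^{-1/p} + (B/Q)^{1/α} g_η(t)^{-1/α}`. On an annulus where
`q ≥ Q` and `b ≤ B`, its integral over the range of `M(·; u)` bounds the width of the annulus. -/
def growthWeight (g : ℝ → ℝ) (η p α Q B t : ℝ) : ℝ :=
  Q ^ (-(1 / p)) * (ginf g η t * t) ^ (-(1 / p)) + (B / Q) ^ (1 / α) * ginf g η t ^ (-(1 / α))

variable {g : ℝ → ℝ} {η p α Q B x y : ℝ}

lemma intervalIntegrable_growthWeight (hη : 1 < η) (hp : 0 ≤ p) (hα : 0 ≤ α)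
    (hgc : ContinuousOn g (Ioi 0)) (hg : ∀ s > 0, 0 < g s) (hx : 0 < x) (hxy : x ≤ y) :
    IntervalIntegrable (growthWeight g η p α Q B) volume x y :=
  ((intervalIntegrable_ginf_mul_rpow hη hgc hg hx hxy (by simpa using hp)).const_mul _).add
    ((intervalIntegrable_ginf_rpow hη hgc hg hx hxy (by simpa using hα)).const_mul _)

lemma integral_growthWeight (hη : 1 < η) (hp : 0 ≤ p) (hα : 0 ≤ α)
    (hgc : ContinuousOn g (Ioi 0)) (hg : ∀ s > 0, 0 < g s) (hx : 0 < x) (hxy : x ≤ y) :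
    ∫ t in x..y, growthWeight g η p α Q B t =
      Q ^ (-(1 / p)) * (∫ t in Ioc x y, (ginf g η t * t) ^ (-(1 / p))) +
        (B / Q) ^ (1 / α) * ∫ t in Ioc x y, ginf g η t ^ (-(1 / α)) := by
  simp only [growthWeight, ← intervalIntegral.integral_of_le hxy]
  rw [intervalIntegral.integral_add
      ((intervalIntegrable_ginf_mul_rpow hη hgc hg hx hxy (by simpa using hp)).const_mul _)
      ((intervalIntegrable_ginf_rpow hη hgc hg hx hxy (by simpa using hα)).const_mul _),
    intervalIntegral.integral_const_mul, intervalIntegral.integral_const_mul]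

lemma mul_le_integral_growthWeight {G : ℝ} (hη : 1 < η) (hp : 0 ≤ p) (hα : 0 ≤ α)
    (hgc : ContinuousOn g (Ioi 0)) (hg : ∀ s > 0, 0 < g s) (hQ : 0 ≤ Q) (hB : 0 ≤ B)
    (hx : 0 < x) (hxy : x ≤ y) (hG : ∀ t ∈ Icc x y, ginf g η t ≤ G) :
    (y - x) * (Q ^ (-(1 / p)) * (G * y) ^ (-(1 / p)) + (B / Q) ^ (1 / α) * G ^ (-(1 / α))) ≤
      ∫ t in x..y, growthWeight g η p α Q B t := by
  obtain ⟨ε, hε, hεg⟩ := exists_pos_le_ginf hη hgc hg hx hxy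
  have hp' : -(1 / p) ≤ 0 := by simpa using hp
  have hα' : -(1 / α) ≤ 0 := by simpa using hα
  rw [← smul_eq_mul, ← intervalIntegral.integral_const]
  refine intervalIntegral.integral_mono_on hxy intervalIntegrable_const
    (intervalIntegrable_growthWeight hη hp hα hgc hg hx hxy) fun t ht ↦ ?_
  have hgt : 0 < ginf g η t := hε.trans_le (hεg t ht)
  have ht₀ : 0 < t := hx.trans_le ht.1
  have hmul : ginf g η t * t ≤ G * y := mul_le_mul (hG t ht) ht.2 ht₀.le (hgt.le.trans (hG t ht))
  exact add_le_add
    (mul_le_mul_of_nonneg_left (Real.rpow_le_rpow_of_nonpos (mul_pos hgt ht₀) hmul hp')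
      (Real.rpow_nonneg hQ _))
    (mul_le_mul_of_nonneg_left (Real.rpow_le_rpow_of_nonpos hgt (hG t ht) hα')
      (Real.rpow_nonneg (div_nonneg hB hQ) _))

lemma exists_pos_between_ginf {σ : ℝ} (hσ : 1 ≤ σ) (hση : σ ^ 2 < η)
    (hgc : ContinuousOn g (Ioi 0)) (hg : ∀ s > 0, 0 < g s) (hx : 0 < x) (hxy : x ≤ y)
    (hyx : y ≤ σ * x) :
    ∃ G, 0 < G ∧ (∀ z ∈ Icc (x / σ) y, G ≤ g z) ∧ ∀ t ∈ Icc x y, ginf g η t ≤ G := by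
  have hσ₀ : 0 < σ := by linarith
  have hη : 1 < η := by nlinarith
  have hxσ : 0 < x / σ := div_pos hx hσ₀
  obtain ⟨z, hz, hmin⟩ := isCompact_Icc.exists_isMinOn
    (nonempty_Icc.2 ((div_le_self hx.le hσ).trans hxy))
    (hgc.mono fun s hs ↦ hxσ.trans_le hs.1)
  refine ⟨g z, hg z (hxσ.trans_le hz.1), fun s hs ↦ hmin hs, fun t ht ↦ ?_⟩
  have ht₀ : 0 < t := hx.trans_le ht.1
  refine ginf_le hη hg ht₀ ⟨?_, ?_⟩
  · calc t / η < t / σ ^ 2 := div_lt_div_of_pos_left ht₀ (by positivity) hση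
      _ ≤ σ * x / σ ^ 2 := div_le_div_of_nonneg_right (ht.2.trans hyx) (by positivity)
      _ = x / σ := by field_simp
      _ ≤ z := hz.1
  · have hση' : σ < η := by nlinarith
    calc z ≤ σ * x := hz.2.trans hyx
      _ < η * x := mul_lt_mul_of_pos_right hση' hx
      _ ≤ η * t := mul_le_mul_of_nonneg_left ht.1 (by linarith)

end GrowthWeight

section AnnulusWidth

lemma le_rpow_mul_of_mul_rpow_le {c k e x y : ℝ} (he : 0 < e) (hc : 0 < c) (hk : 0 ≤ k)
    (hx : 0 ≤ x) (hy : 0 ≤ y) (h : c * x ^ e ≤ k * y ^ e) :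
    x ≤ k ^ (1 / e) * (c ^ (-(1 / e)) * y) := by
  have hroot : ∀ z : ℝ, 0 ≤ z → (z ^ e) ^ (1 / e) = z := fun z hz ↦ by
    rw [one_div, Real.rpow_rpow_inv hz he.ne']
  have hxe : x ^ e ≤ k * (c⁻¹ * y ^ e) := by
    rw [← mul_le_mul_iff_right₀ hc]
    exact h.trans_eq (by field_simp)
  calc x = (x ^ e) ^ (1 / e) := (hroot x hx).symm
    _ ≤ (k * (c⁻¹ * y ^ e)) ^ (1 / e) :=
      Real.rpow_le_rpow (by positivity) hxe (by positivity)
    _ = k ^ (1 / e) * (c ^ (-(1 / e)) * y) := by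
      rw [Real.mul_rpow hk (by positivity), Real.mul_rpow (by positivity) (by positivity),
        hroot y hy, Real.inv_rpow hc.le, Real.rpow_neg hc.le]

lemma width_le_of_flux_bound {p Q G K Λ Δ D m : ℝ} (hp : 0 < p) (hQ : 0 < Q) (hG : 0 < G)
    (hK : 0 ≤ K) (hΛ : 0 ≤ Λ) (hΔ : 0 < Δ) (hD : 0 < D) (hm : 0 < m) (hmD : m ≤ Λ * D)
    (h : Q * G ≤ K * ((D / Δ) ^ (p - 1) / Δ)) :
    Δ ≤ (K * Λ) ^ (1 / p) * (D * (Q ^ (-(1 / p)) * (G * m) ^ (-(1 / p)))) := by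
  have hflux : (D / Δ) ^ (p - 1) / Δ = D ^ p / Δ ^ p / D := by
    rw [Real.rpow_sub_one (by positivity), Real.div_rpow hD.le hΔ.le]
    field_simp
  have hle : Q * (G * m) * Δ ^ p ≤ K * Λ * D ^ p := by
    calc Q * (G * m) * Δ ^ p ≤ K * ((D / Δ) ^ (p - 1) / Δ) * (Λ * D) * Δ ^ p := by
          rw [← mul_assoc]
          gcongr
      _ = K * Λ * D ^ p := by
        rw [hflux]
        field_simp
  rw [mul_comm D, ← Real.mul_rpow hQ.le (by positivity)]
  exact le_rpow_mul_of_mul_rpow_le hp (by positivity) (by positivity) hΔ.le hD.le hle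

lemma width_le_of_drift_bound {α Q B G K Δ D : ℝ} (hα : 0 < α) (hQ : 0 < Q) (hB : 0 ≤ B)
    (hG : 0 < G) (hK : 0 ≤ K) (hΔ : 0 < Δ) (hD : 0 ≤ D)
    (h : Q * G ≤ K * (B * (D / Δ) ^ α)) :
    Δ ≤ K ^ (1 / α) * (D * ((B / Q) ^ (1 / α) * G ^ (-(1 / α)))) := by
  rw [Real.div_rpow hD hΔ.le] at h
  have hle : G * Δ ^ α ≤ K * (B / Q) * D ^ α := by
    calc G * Δ ^ α = Q * G * (Δ ^ α / Q) := by field_simp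
      _ ≤ K * (B * (D ^ α / Δ ^ α)) * (Δ ^ α / Q) := by gcongr
      _ = K * (B / Q) * D ^ α := by field_simp
  calc Δ ≤ (K * (B / Q)) ^ (1 / α) * (G ^ (-(1 / α)) * D) :=
        le_rpow_mul_of_mul_rpow_le hα hG (by positivity) hΔ.le hD hle
    _ = K ^ (1 / α) * (D * ((B / Q) ^ (1 / α) * G ^ (-(1 / α)))) := by
      rw [Real.mul_rpow hK (by positivity)]
      ring

lemma width_le_of_source_bound {p α Q B G K Λ Δ D m : ℝ} (hp : 0 < p) (hα : 0 < α) (hQ : 0 < Q)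
    (hB : 0 ≤ B) (hG : 0 < G) (hK : 0 ≤ K) (hΛ : 0 ≤ Λ) (hΔ : 0 < Δ) (hD : 0 < D) (hm : 0 < m)
    (hmD : m ≤ Λ * D) (h : Q * G ≤ K * ((D / Δ) ^ (p - 1) / Δ + B * (D / Δ) ^ α)) :
    Δ ≤ ((2 * K * Λ) ^ (1 / p) + (2 * K) ^ (1 / α)) *
      (D * (Q ^ (-(1 / p)) * (G * m) ^ (-(1 / p)) + (B / Q) ^ (1 / α) * G ^ (-(1 / α)))) := by
  rcases le_total (B * (D / Δ) ^ α) ((D / Δ) ^ (p - 1) / Δ) with hcase | hcase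
  · have hflux : Q * G ≤ 2 * K * ((D / Δ) ^ (p - 1) / Δ) := by nlinarith
    refine (width_le_of_flux_bound hp hQ hG (by positivity) hΛ hΔ hD hm hmD hflux).trans ?_
    gcongr
    · exact le_add_of_nonneg_right (by positivity)
    · exact le_add_of_nonneg_right (by positivity)
  · have hdrift : Q * G ≤ 2 * K * (B * (D / Δ) ^ α) := by nlinarith
    refine (width_le_of_drift_bound hα hQ hB hG (by positivity) hΔ hD.le hdrift).trans ?_
    gcongr
    · exact le_add_of_nonneg_left (by positivity)
    · exact le_add_of_nonneg_left (by positivity)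

section Subsolution

variable {n : ℕ} {p α C₁ C₂ η L : ℝ}

lemma exists_width_le_integral_growthWeight_of_ratio_le (hn : 2 ≤ n) (hp : 1 ≤ p) (hα : 0 < α)
    (hαp : α ≤ p) (hC₁ : 0 < C₁) (hC₂ : 0 < C₂) (hL : 1 < L) (hLη : L ^ 4 < η) :
    ∃ K, 0 < K ∧ ∀ {Z : Euc n → Euc n} {b q u : Euc n → ℝ} {g : ℝ → ℝ} {s t B Q : ℝ},
      IsSubsolution p α C₁ C₂ Z b (fun x ↦ q x * g (u x)) u →
      (∀ r > 0, ∀ x, ‖x‖ ≤ r → u x ≤ sphMax u r) →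
      ContinuousOn g (Ioi 0) → (∀ s > 0, 0 < g s) → 0 < s → s < t → 0 < sphMax u s →
      L * sphMax u s ≤ sphMax u t → sphMax u t ≤ L ^ 2 * sphMax u s → 0 < Q → 0 ≤ B →
      (∀ᵐ x, x ∈ Ann n s t → Q ≤ q x) → (∀ᵐ x, x ∈ Ann n s t → b x ≤ B) →
      t - s ≤ K * ∫ y in sphMax u s..sphMax u t, growthWeight g η p α Q B y := by
  obtain ⟨K, hK, hbound⟩ := exists_source_bound_of_growth hn hp hα hαp hC₁ hC₂
    (κ := (L ^ 2)⁻¹) (by positivity) (inv_le_one_of_one_le₀ (one_le_pow₀ hL.le))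
  have hL' : 0 < L - 1 := sub_pos.2 hL
  have hp₀ : 0 < p := by linarith
  have hη : 1 < η := (one_lt_pow₀ hL four_ne_zero).trans hLη
  refine ⟨(2 * K * (L / (L - 1))) ^ (1 / p) + (2 * K) ^ (1 / α), by positivity, ?_⟩
  intro Z b q u g s t B Q hsub hmax hgc hg hs hst hMs hLM hML hQ hB hqQ hbB
  have hM : sphMax u s < sphMax u t := (lt_mul_of_one_lt_left hMs hL).trans_le hLM
  obtain ⟨G, hG, hGg, hgG⟩ := exists_pos_between_ginf (η := η) (one_le_pow₀ hL.le)
    (by rwa [← pow_mul]) hgc hg hMs hM.le hML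
  have hsource : ∀ᵐ x, x ∈ Ann n s t →
      sphMax u s - (L ^ 2)⁻¹ * (sphMax u t - sphMax u s) < u x → Q * G ≤ q x * g (u x) := by
    filter_upwards [hqQ] with x hqx hx hux
    have hlow : sphMax u s / L ^ 2 ≤ u x := by
      refine le_trans ?_ hux.le
      field_simp
      linarith
    exact mul_le_mul (hqx hx) (hGg _ ⟨hlow, hmax t (hs.trans hst) x hx.2.le⟩) hG.le
      (hQ.le.trans (hqx hx))
  have hratio : sphMax u t ≤ L / (L - 1) * (sphMax u t - sphMax u s) := by
    rw [div_mul_eq_mul_div, le_div_iff₀ hL']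
    linarith
  exact (width_le_of_source_bound hp₀ hα hQ hB hG hK.le (by positivity) (sub_pos.2 hst)
    (sub_pos.2 hM) (hMs.trans hM) hratio
    (hbound hsub hmax hs hst hM hB (by positivity) hbB hsource)).trans
    (mul_le_mul_of_nonneg_left
      (mul_le_integral_growthWeight hη hp₀.le hα.le hgc hg hQ.le hB hMs hM.le hgG)
      (by positivity))

end Subsolution

end AnnulusWidth

section Chaining

lemma sub_le_of_forall_ratio_le_sq {M Φ : ℝ → ℝ} {a b L : ℝ} (hL : 1 < L) (hab : a ≤ b)
    (hM : ContinuousOn M (Icc a b)) (hpos : ∀ s ∈ Icc a b, 0 < M s)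
    (hstep : ∀ s ∈ Icc a b, ∀ t ∈ Icc a b, s < t → L * M s ≤ M t → M t ≤ L ^ 2 * M s →
      t - s ≤ Φ (M t) - Φ (M s)) (hLM : L * M a ≤ M b) :
    b - a ≤ Φ (M b) - Φ (M a) := by
  have hlt : ∀ s ∈ Icc a b, M s < L * M s := fun s hs ↦ lt_mul_of_one_lt_left (hpos s hs) hL
  have hchain : ∀ (k : ℕ), ∀ s ∈ Icc a b, L * M s ≤ M b → M b ≤ L ^ (k + 2) * M s →
      b - s ≤ Φ (M b) - Φ (M s) := by
    intro k
    induction k with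
    | zero =>
      intro s hs hLs hkL
      refine hstep s hs b (right_mem_Icc.2 hab) (hs.2.lt_of_ne ?_) hLs hkL
      rintro rfl
      exact (hlt s hs).not_ge hLs
    | succ k ih =>
      intro s hs hLs hkL
      obtain ⟨t, ht, hMt⟩ := intermediate_value_Icc hs.2 (hM.mono (Icc_subset_Icc_left hs.1))
        ⟨(hlt s hs).le, hLs⟩
      have hst : s < t := ht.1.lt_of_ne (by
        rintro rfl
        exact (hlt s hs).ne hMt)
      have htI : t ∈ Icc a b := ⟨hs.1.trans ht.1, ht.2⟩
      rcases le_total (L * M t) (M b) with hLt | hLt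
      · have hfirst := hstep s hs t htI hst hMt.ge
          (hMt.trans_le
            (mul_le_mul_of_nonneg_right (le_self_pow₀ hL.le two_ne_zero) (hpos s hs).le))
        have hrest := ih t htI hLt (by rw [hMt]; exact hkL.trans_eq (by ring))
        linarith
      · exact hstep s hs b (right_mem_Icc.2 hab) (hst.trans_le ht.2) hLs
          (hLt.trans_eq (by rw [hMt]; ring))
  obtain ⟨k, hk⟩ := pow_unbounded_of_one_lt (M b / M a) hL
  have ha := left_mem_Icc.2 hab
  refine hchain k a ha hLM (((div_lt_iff₀ (hpos a ha)).1 hk).le.trans ?_)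
  exact mul_le_mul_of_nonneg_right (pow_le_pow_right₀ hL.le (by omega)) (hpos a ha).le

variable {n : ℕ} {p α C₁ C₂ η L : ℝ}

theorem exists_width_le_integral_growthWeight (hn : 2 ≤ n) (hp : 1 ≤ p) (hα : 0 < α)
    (hpα : p - 1 ≤ α) (hαp : α ≤ p) (hC₁ : 0 < C₁) (hC₂ : 0 < C₂) (hL : 1 < L)
    (hLη : L ^ 4 < η) :
    ∃ K, 0 < K ∧ ∀ {Z : Euc n → Euc n} {b q u : Euc n → ℝ} {g : ℝ → ℝ} {r₁ r₂ B Q : ℝ},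
      IsSubsolution p α C₁ C₂ Z b (fun x ↦ q x * g (u x)) u →
      (∀ x, 0 ≤ q x * g (u x)) → LocBdd b →
      ContinuousOn g (Ioi 0) → (∀ s > 0, 0 < g s) → 0 < r₁ → r₁ < r₂ → 0 < sphMax u r₁ →
      L * sphMax u r₁ ≤ sphMax u r₂ → 0 < Q → 0 ≤ B →
      (∀ᵐ x, x ∈ Ann n r₁ r₂ → Q ≤ q x) → (∀ᵐ x, x ∈ Ann n r₁ r₂ → b x ≤ B) →
      r₂ - r₁ ≤ K * ∫ y in sphMax u r₁..sphMax u r₂, growthWeight g η p α Q B y := by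
  obtain ⟨K, hK, hwidth⟩ :=
    exists_width_le_integral_growthWeight_of_ratio_le hn hp hα hαp hC₁ hC₂ hL hLη
  refine ⟨K, hK, ?_⟩
  intro Z b q u g r₁ r₂ B Q hsub ha hb hgc hg hr₁ hr hM₁ hLM hQ hB hqQ hbB
  have : NeZero n := ⟨by omega⟩
  have hη : 1 < η := (one_lt_pow₀ hL four_ne_zero).trans hLη
  have hcont : Continuous u := hsub.contDiff.continuous
  have hmax : ∀ r > 0, ∀ x, ‖x‖ ≤ r → u x ≤ sphMax u r := fun r hr x hx ↦
    hsub.le_sphMax_of_norm_le hn hp hα hpα hαp hC₁ hC₂ hb ha hr hx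
  have hmono : ∀ s ∈ Icc r₁ r₂, sphMax u r₁ ≤ sphMax u s := fun s hs ↦
    monotoneOn_sphMax hcont hmax hr₁ (hr₁.trans_le hs.1) hs.1
  have hint : ∀ s ∈ Icc r₁ r₂, IntervalIntegrable (growthWeight g η p α Q B) volume
      (sphMax u r₁) (sphMax u s) := fun s hs ↦
    intervalIntegrable_growthWeight hη (by linarith) hα.le hgc hg hM₁ (hmono s hs)
  have hchain := sub_le_of_forall_ratio_le_sq
    (Φ := fun m ↦ K * ∫ y in sphMax u r₁..m, growthWeight g η p α Q B y) hL hr.le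
    ((continuousOn_sphMax hcont).mono fun s hs ↦ hr₁.le.trans hs.1)
    (fun s hs ↦ hM₁.trans_le (hmono s hs)) (fun s hs t ht hst hLst hstL ↦ ?_) hLM
  · simpa only [intervalIntegral.integral_same, mul_zero, sub_zero] using hchain
  · have hAnn : Ann n s t ⊆ Ann n r₁ r₂ := fun x hx ↦ ⟨hs.1.trans_lt hx.1, hx.2.trans_le ht.2⟩
    rw [← mul_sub, intervalIntegral.integral_interval_sub_left (hint t ht) (hint s hs)]
    exact hwidth hsub hmax hgc hg (hr₁.trans_le hs.1) hst (hM₁.trans_le (hmono s hs)) hLst hstL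
      hQ hB (hqQ.mono fun x hx hxA ↦ hx (hAnn hxA)) (hbB.mono fun x hx hxA ↦ hx (hAnn hxA))

end Chaining

section EssentialBounds

variable {n : ℕ}

lemma measurableSet_Ann (r s : ℝ) : MeasurableSet (Ann n r s) :=
  (measurableSet_lt measurable_const measurable_norm).inter
    (measurableSet_lt measurable_norm measurable_const)

lemma ae_restrict_Ann_neBot [NeZero n] {r s : ℝ} (hr : 0 ≤ r) (hrs : r < s) :
    (ae (volume.restrict (Ann n r s))).NeBot := by
  rw [ae_neBot, Ne, Measure.restrict_eq_zero]
  obtain ⟨x, hx⟩ : (sphere (0 : Euc n) ((r + s) / 2)).Nonempty :=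
    NormedSpace.sphere_nonempty.2 (by linarith)
  rw [mem_sphere_zero_iff_norm] at hx
  have hopen : IsOpen (Ann n r s) := isOpen_Ioo.preimage continuous_norm
  exact (hopen.measure_pos volume ⟨x, by rw [hx]; linarith, by rw [hx]; linarith⟩).ne'

lemma LocBdd.isBoundedUnder_ae {F : Euc n → ℝ} (hF : LocBdd F) (r s : ℝ) :
    IsBoundedUnder (· ≤ ·) (ae (volume.restrict (Ann n r s))) F := by
  obtain ⟨C, hC⟩ := hF _ (isCompact_closedBall 0 s)
  refine isBoundedUnder_of_eventually_le (a := C) ?_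
  filter_upwards [ae_restrict_mem (measurableSet_Ann r s)] with x hx
  exact hC x (mem_closedBall_zero_iff.2 hx.2.le)

lemma LocBdd.rpow_const {F : Euc n → ℝ} {e : ℝ} (hF : LocBdd F) (hF₀ : ∀ x, 0 ≤ F x)
    (he : 0 ≤ e) : LocBdd fun x ↦ F x ^ e := fun S hS ↦
  have ⟨C, hC⟩ := hF S hS
  ⟨C ^ e, fun x hx ↦ Real.rpow_le_rpow (hF₀ x) (hC x hx) he⟩

variable [NeZero n] {F : Euc n → ℝ} {r s r' s' : ℝ}

lemma essInf_Ann_nonneg (hF₀ : ∀ x, 0 ≤ F x) (hF : LocBdd F) (hr : 0 ≤ r) (hrs : r < s) :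
    0 ≤ essInf F (volume.restrict (Ann n r s)) :=
  have := ae_restrict_Ann_neBot (n := n) hr hrs
  le_essInf_of_ae_le 0 (.of_forall hF₀) (hF.isBoundedUnder_ae r s).isCoboundedUnder_ge

lemma essInf_Ann_le_of_subset (hF₀ : ∀ x, 0 ≤ F x) (hF : LocBdd F) (hr : 0 ≤ r) (hrs : r < s)
    (h : Ann n r s ⊆ Ann n r' s') :
    essInf F (volume.restrict (Ann n r' s')) ≤ essInf F (volume.restrict (Ann n r s)) :=
  have := ae_restrict_Ann_neBot (n := n) hr hrs
  le_essInf_of_ae_le _ (ae_restrict_of_ae_restrict_of_subset h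
    (ae_essInf_le (isBoundedUnder_of_eventually_ge (.of_forall hF₀))))
    (hF.isBoundedUnder_ae r s).isCoboundedUnder_ge

lemma essSup_Ann_nonneg (hF₀ : ∀ x, 0 ≤ F x) (hF : LocBdd F) (hr : 0 ≤ r) (hrs : r < s) :
    0 ≤ essSup F (volume.restrict (Ann n r s)) := by
  have := ae_restrict_Ann_neBot (n := n) hr hrs
  obtain ⟨x, hx⟩ := (ae_le_essSup (hF.isBoundedUnder_ae r s)).exists
  exact (hF₀ x).trans hx

lemma essSup_Ann_le_of_subset (hF₀ : ∀ x, 0 ≤ F x) (hF : LocBdd F) (hr : 0 ≤ r) (hrs : r < s)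
    (h : Ann n r s ⊆ Ann n r' s') :
    essSup F (volume.restrict (Ann n r s)) ≤ essSup F (volume.restrict (Ann n r' s')) :=
  have := ae_restrict_Ann_neBot (n := n) hr hrs
  essSup_le_of_ae_le _ (ae_restrict_of_ae_restrict_of_subset h
    (ae_le_essSup (hF.isBoundedUnder_ae r' s')))
    (isBoundedUnder_of_eventually_ge (a := 0) (.of_forall hF₀)).isCoboundedUnder_le

end EssentialBounds

section RadialIntegrals

lemma setIntegral_Ioc_le_mul_sub {f : ℝ → ℝ} {a b c : ℝ} (hab : a ≤ b)
    (hf : ∀ t ∈ Ioc a b, f t ∈ Icc 0 c) : ∫ t in Ioc a b, f t ≤ c * (b - a) := by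
  have hnorm : ‖∫ t in Ioc a b, f t‖ ≤ c * volume.real (Ioc a b) :=
    norm_setIntegral_le_of_norm_le_const measure_Ioc_lt_top fun t ht ↦ by
      rw [Real.norm_of_nonneg (hf t ht).1]
      exact (hf t ht).2
  rw [Real.volume_real_Ioc_of_le hab] at hnorm
  exact (Real.le_norm_self _).trans hnorm

lemma rpow_mul_div_one_add_le {p α ξ q Q β β' : ℝ} (hp : 1 < p) (hα : 0 < α) (hξ : 0 < ξ)
    (hq : 0 ≤ q) (hqQ : q ≤ Q) (hβ : 0 < β) (hββ' : β ≤ β') :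
    (ξ * (q / (1 + ξ * q ^ ((α - p + 1) / α) * β'))) ^ (1 / (p - 1)) ≤
      (Q / β ^ (α / (p - 1))) ^ (1 / α) := by
  have hβ' : 0 < β' := hβ.trans_le hββ'
  have hp₁ : 0 < p - 1 := by linarith
  have hQ : 0 ≤ Q := hq.trans hqQ
  have hbase : ξ * (q / (1 + ξ * q ^ ((α - p + 1) / α) * β')) ≤ Q ^ ((p - 1) / α) / β := by
    rcases hq.eq_or_lt with rfl | hq
    · rw [zero_div, mul_zero]
      positivity
    · calc ξ * (q / (1 + ξ * q ^ ((α - p + 1) / α) * β'))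
          ≤ ξ * (q / (ξ * q ^ ((α - p + 1) / α) * β')) := by
            gcongr
            exact le_add_of_nonneg_left zero_le_one
        _ = q ^ (1 - (α - p + 1) / α) / β' := by
          rw [Real.rpow_sub hq, Real.rpow_one]
          field_simp
        _ = q ^ ((p - 1) / α) / β' := by
          congr 2
          field_simp
          ring
        _ ≤ Q ^ ((p - 1) / α) / β := by gcongr
  calc (ξ * (q / (1 + ξ * q ^ ((α - p + 1) / α) * β'))) ^ (1 / (p - 1))
      ≤ (Q ^ ((p - 1) / α) / β) ^ (1 / (p - 1)) :=
        Real.rpow_le_rpow (by positivity) hbase (by positivity)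
    _ = (Q / β ^ (α / (p - 1))) ^ (1 / α) := by
      rw [Real.div_rpow hQ (by positivity), Real.div_rpow (by positivity) hβ.le,
        ← Real.rpow_mul hβ.le, ← Real.rpow_mul hQ]
      congr 2 <;> field_simp

variable {n : ℕ} {q b : Euc n → ℝ} {p α τ r₁ r₂ ξ : ℝ}

lemma Ann_subset_Ann_div_mul (hτ : 0 < τ) (hrτ : r₂ ≤ τ * r₁) (hξ : ξ ∈ Ioc r₁ r₂) :
    Ann n r₁ r₂ ⊆ Ann n (ξ / τ) (τ * ξ) := fun _ hx ↦
  ⟨((div_le_iff₀' hτ).2 (hξ.2.trans hrτ)).trans_lt hx.1,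
    hx.2.trans_le (hrτ.trans (mul_le_mul_of_nonneg_left hξ.1.le hτ.le))⟩

/-- The essential supremum of `b` on the annulus `r₁ < |x| < r₂`, computed through the power
`b^{(p-1)/α}` that occurs in `fdef`. -/
def driftSup (b : Euc n → ℝ) (p α r₁ r₂ : ℝ) : ℝ :=
  essSup (fun x ↦ b x ^ ((p - 1) / α)) (volume.restrict (Ann n r₁ r₂)) ^ (α / (p - 1))

lemma ae_le_driftSup (hp : 1 < p) (hα : 0 < α) (hb₀ : ∀ x, 0 ≤ b x) (hb : LocBdd b) :
    ∀ᵐ x, x ∈ Ann n r₁ r₂ → b x ≤ driftSup b p α r₁ r₂ := by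
  have he : 0 < (p - 1) / α := div_pos (by linarith) hα
  refine (ae_restrict_iff' (measurableSet_Ann r₁ r₂)).1 ?_
  filter_upwards [ae_le_essSup ((hb.rpow_const hb₀ he.le).isBoundedUnder_ae r₁ r₂)] with x hx
  rw [driftSup, ← inv_div (p - 1) α]
  exact (Real.le_rpow_inv_iff_of_pos (hb₀ x) ((Real.rpow_nonneg (hb₀ x) _).trans hx) he).2 hx

lemma ae_essInf_Ann_le (hq₀ : ∀ x, 0 ≤ q x) :
    ∀ᵐ x, x ∈ Ann n r₁ r₂ → essInf q (volume.restrict (Ann n r₁ r₂)) ≤ q x :=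
  (ae_restrict_iff' (measurableSet_Ann r₁ r₂)).1
    (ae_essInf_le (isBoundedUnder_of_eventually_ge (.of_forall hq₀)))

variable [NeZero n]

lemma qinf_nonneg (hq₀ : ∀ x, 0 ≤ q x) (hq : LocBdd q) (hτ : 1 < τ) (hξ : 0 < ξ) :
    0 ≤ qinf q τ ξ :=
  essInf_Ann_nonneg hq₀ hq (div_nonneg hξ.le (by linarith))
    ((div_lt_self hξ hτ).trans (lt_mul_of_one_lt_left hξ hτ))

lemma qinf_le_essInf_Ann (hq₀ : ∀ x, 0 ≤ q x) (hq : LocBdd q) (hτ : 0 < τ) (hr₁ : 0 ≤ r₁)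
    (hr : r₁ < r₂) (hrτ : r₂ ≤ τ * r₁) (hξ : ξ ∈ Ioc r₁ r₂) :
    qinf q τ ξ ≤ essInf q (volume.restrict (Ann n r₁ r₂)) :=
  essInf_Ann_le_of_subset hq₀ hq hr₁ hr (Ann_subset_Ann_div_mul hτ hrτ hξ)

lemma setIntegral_qinf_rpow_le (hp : 0 ≤ p) (hq₀ : ∀ x, 0 ≤ q x) (hq : LocBdd q) (hτ : 1 < τ)
    (hr₁ : 0 < r₁) (hr : r₁ < r₂) (hrτ : r₂ ≤ τ * r₁) :
    ∫ ξ in Ioc r₁ r₂, qinf q τ ξ ^ (1 / p) ≤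
      essInf q (volume.restrict (Ann n r₁ r₂)) ^ (1 / p) * (r₂ - r₁) :=
  setIntegral_Ioc_le_mul_sub hr.le fun _ hξ ↦
    have hqξ := qinf_nonneg hq₀ hq hτ (hr₁.trans hξ.1)
    ⟨Real.rpow_nonneg hqξ _, Real.rpow_le_rpow hqξ
      (qinf_le_essInf_Ann hq₀ hq (by linarith) hr₁.le hr hrτ hξ) (by positivity)⟩

lemma driftSup_nonneg (hp : 1 ≤ p) (hα : 0 ≤ α) (hb₀ : ∀ x, 0 ≤ b x) (hb : LocBdd b)
    (hr₁ : 0 ≤ r₁) (hr : r₁ < r₂) : 0 ≤ driftSup b p α r₁ r₂ :=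
  Real.rpow_nonneg (essSup_Ann_nonneg (fun x ↦ Real.rpow_nonneg (hb₀ x) _)
    (hb.rpow_const hb₀ (div_nonneg (by linarith) hα)) hr₁ hr) _

lemma setIntegral_mul_fdef_rpow_le (hp : 1 < p) (hα : 0 < α) (hq₀ : ∀ x, 0 ≤ q x)
    (hq : LocBdd q) (hb₀ : ∀ x, 0 ≤ b x) (hb : LocBdd b) (hτ : 1 < τ) (hr₁ : 0 < r₁)
    (hr : r₁ < r₂) (hrτ : r₂ ≤ τ * r₁) (hB : 0 < driftSup b p α r₁ r₂) :
    ∫ ξ in Ioc r₁ r₂, (ξ * fdef q b p α τ ξ) ^ (1 / (p - 1)) ≤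
      (essInf q (volume.restrict (Ann n r₁ r₂)) / driftSup b p α r₁ r₂) ^ (1 / α) *
        (r₂ - r₁) := by
  have he : 0 ≤ (p - 1) / α := div_nonneg (by linarith) hα.le
  have hpow₀ : ∀ x, 0 ≤ b x ^ ((p - 1) / α) := fun x ↦ Real.rpow_nonneg (hb₀ x) _
  have hpow := hb.rpow_const hb₀ he
  have hβ : 0 < essSup (fun x ↦ b x ^ ((p - 1) / α)) (volume.restrict (Ann n r₁ r₂)) := by
    refine (essSup_Ann_nonneg hpow₀ hpow hr₁.le hr).lt_of_ne fun h ↦ hB.ne' ?_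
    rw [driftSup, ← h, Real.zero_rpow (div_ne_zero hα.ne' (by linarith))]
  refine setIntegral_Ioc_le_mul_sub hr.le fun ξ hξ ↦ ?_
  have hξ₀ : 0 < ξ := hr₁.trans hξ.1
  have hqξ := qinf_nonneg hq₀ hq hτ hξ₀
  have hβξ := essSup_Ann_le_of_subset hpow₀ hpow hr₁.le hr
    (Ann_subset_Ann_div_mul (by linarith) hrτ hξ)
  refine ⟨Real.rpow_nonneg (mul_nonneg hξ₀.le (div_nonneg hqξ ?_)) _, rpow_mul_div_one_add_le hp
    hα hξ₀ hqξ (qinf_le_essInf_Ann hq₀ hq (by linarith) hr₁.le hr hrτ hξ) hβ hβξ⟩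
  have := hβ.le.trans hβξ
  positivity

end RadialIntegrals

section Dichotomy

variable {n : ℕ} {p α C₁ C₂ : ℝ}

lemma locallyIntegrable_of_forall_isCompact_bound {X F : Type*} [TopologicalSpace X] [T2Space X]
    [LocallyCompactSpace X] [MeasurableSpace X] [OpensMeasurableSpace X] [NormedAddCommGroup F]
    {μ : Measure X} [IsFiniteMeasureOnCompacts μ] {f : X → F} (hf : AEStronglyMeasurable f μ)
    (h : ∀ S, IsCompact S → ∃ C, ∀ x ∈ S, ‖f x‖ ≤ C) : LocallyIntegrable f μ := by
  refine locallyIntegrable_iff.2 fun S hS ↦ ?_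
  obtain ⟨C, hC⟩ := h S hS
  exact Measure.integrableOn_of_bounded hS.measure_lt_top.ne hf
    ((ae_restrict_mem hS.measurableSet).mono hC)

lemma LocBdd.locallyIntegrable_mul {w f : Euc n → ℝ} (hw : LocBdd w) (hwm : Measurable w)
    (hw₀ : ∀ x, 0 ≤ w x) (hf : Continuous f) : LocallyIntegrable fun x ↦ w x * f x := by
  refine locallyIntegrable_of_forall_isCompact_bound (hwm.mul hf.measurable).aestronglyMeasurable
    fun S hS ↦ ?_
  obtain ⟨C, hC⟩ := hw S hS
  obtain ⟨C', hC'⟩ := hS.exists_bound_of_continuousOn hf.continuousOn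
  refine ⟨C * C', fun x hx ↦ ?_⟩
  rw [norm_mul, Real.norm_of_nonneg (hw₀ x)]
  exact mul_le_mul (hC x hx) (hC' x hx) (norm_nonneg _) ((hw₀ x).trans (hC x hx))

lemma StructCond.locallyIntegrable_flux {A : Euc n → Euc n → Euc n} {V : Euc n → Euc n}
    (hA : StructCond A p C₁ C₂) (hp : 1 ≤ p) (hV : Continuous V) :
    LocallyIntegrable fun x ↦ A x (V x) := by
  refine locallyIntegrable_of_forall_isCompact_bound
    (hA.1.comp (measurable_id.prodMk hV.measurable)).aestronglyMeasurable fun S hS ↦ ?_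
  have hcont : Continuous fun x ↦ C₂ * ‖V x‖ ^ (p - 1) :=
    continuous_const.mul (hV.norm.rpow_const fun _ ↦ Or.inr (by linarith))
  obtain ⟨C, hC⟩ := hS.exists_bound_of_continuousOn hcont.continuousOn
  exact ⟨C, fun x hx ↦ ((hA.2 x _).2.trans (Real.le_norm_self _)).trans (hC x hx)⟩

lemma IsWeakSol.isSubsolution {A : Euc n → Euc n → Euc n} {b a u : Euc n → ℝ}
    (hp : 1 ≤ p) (hα : 0 ≤ α) (hA : StructCond A p C₁ C₂) (hbm : Measurable b)
    (hb₀ : ∀ x, 0 ≤ b x) (hb : LocBdd b) (ha : LocallyIntegrable a) (hu : ContDiff ℝ 1 u)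
    (hw : IsWeakSol A b α a univ u) :
    IsSubsolution p α C₁ C₂ (fun x ↦ A x (∇ u x)) b a u := by
  have hgrad := continuous_gradient hu
  have hflux := hA.locallyIntegrable_flux hp hgrad
  have hdrift : LocallyIntegrable fun x ↦ b x * ‖∇ u x‖ ^ α :=
    hb.locallyIntegrable_mul hbm hb₀ (hgrad.norm.rpow_const fun _ ↦ Or.inr hα)
  refine ⟨hu, fun x ↦ (hA.2 x _).1, fun x ↦ (hA.2 x _).2, hflux, ha.sub hdrift,
    fun _ ↦ integral_mul_add_inner_gradient_nonpos (ha.sub hdrift) hflux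
      fun φ hφ hφ_supp hφ₀ ↦ ?_⟩
  have hφ' : ContDiff ℝ 1 φ := hφ.of_le (by exact_mod_cast le_top)
  have hweak := hw φ hφ hφ_supp (subset_univ _) hφ₀
  simp only [setIntegral_univ] at hweak
  simp only [Pi.sub_apply, sub_mul]
  have ha_int := integrable_mul_of_hasCompactSupport ha hφ.continuous hφ_supp
  have hdrift_int := integrable_mul_of_hasCompactSupport hdrift hφ.continuous hφ_supp
  have hflux_int := integrable_inner_of_hasCompactSupport hflux (continuous_gradient hφ')
    (hasCompactSupport_gradient hφ_supp)
  rw [integral_add (by exact ha_int.sub hdrift_int) hflux_int, integral_sub ha_int hdrift_int]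
  linarith

lemma dichotomy_of_le_add {K p α Δ Q B X Y I J : ℝ} (hK : 0 < K) (hp : 0 < p) (hα : 0 < α)
    (hΔ : 0 < Δ) (hQ : 0 ≤ Q) (hB : 0 ≤ B) (hI : 0 ≤ I) (hX : X ≤ Q ^ (1 / p) * Δ)
    (hY : 0 < B → Y ≤ (Q / B) ^ (1 / α) * Δ)
    (h : 0 < Q → Δ ≤ K * (Q ^ (-(1 / p)) * I + (B / Q) ^ (1 / α) * J)) :
    1 / (2 * K) * X ≤ I ∨ 1 / (2 * K) * Y ≤ J := by
  simp only [one_div_mul_eq_div, div_le_iff₀' (show 0 < 2 * K by positivity)]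
  rcases hQ.eq_or_lt with rfl | hQ
  · rw [Real.zero_rpow (by positivity), zero_mul] at hX
    exact Or.inl (hX.trans (by positivity))
  rcases le_total Δ (2 * K * (Q ^ (-(1 / p)) * I)) with hcase | hcase
  · left
    calc X ≤ Q ^ (1 / p) * (2 * K * (Q ^ (-(1 / p)) * I)) := hX.trans (by gcongr)
      _ = 2 * K * I := by
        rw [Real.rpow_neg hQ.le]
        field_simp
  · right
    have hΔJ : Δ ≤ 2 * K * ((B / Q) ^ (1 / α) * J) := by linarith [h hQ]
    have hB : 0 < B := hB.lt_of_ne (by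
      rintro rfl
      rw [zero_div, Real.zero_rpow (by positivity), zero_mul, mul_zero] at hΔJ
      exact hΔJ.not_gt hΔ)
    calc Y ≤ (Q / B) ^ (1 / α) * (2 * K * ((B / Q) ^ (1 / α) * J)) := (hY hB).trans (by gcongr)
      _ = 2 * K * J := by
        rw [← inv_div Q B, Real.inv_rpow (by positivity)]
        field_simp

lemma exists_one_lt_pow_four_lt {η : ℝ} (hη : 1 < η) :
    ∃ L, 1 < L ∧ L ^ 4 < η ∧
      ∀ {x y : ℝ}, 0 < x → x ≤ η ^ (-(1 / 2 : ℝ)) * y → L * x ≤ y := by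
  have hη₀ : 0 < η := one_pos.trans hη
  refine ⟨η ^ (1 / 8 : ℝ), Real.one_lt_rpow hη (by norm_num), ?_, fun {x y} hx hxy ↦ ?_⟩
  · rw [← Real.rpow_mul_natCast hη₀.le]
    exact Real.rpow_lt_self_of_one_lt hη (by norm_num)
  · rw [Real.rpow_neg hη₀.le, ← div_eq_inv_mul, le_div_iff₀' (by positivity)] at hxy
    exact (mul_le_mul_of_nonneg_right
      (Real.rpow_le_rpow_of_exponent_le hη.le (by norm_num)) hx.le).trans hxy

end Dichotomy

/-- Lemma 3.3: dichotomy estimate on annuli `r₂ ≤ τ r₁` when `M` grows at least by the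
factor `η^{1/2}`. -/
theorem stmt_6 (n : ℕ) (hn : 2 ≤ n) (p C₁ C₂ α : ℝ) (hp : 1 < p)
    (hC₁ : 0 < C₁) (hC₂ : 0 < C₂) (hα₁ : p - 1 ≤ α) (hα₂ : α ≤ p)
    (η : ℝ) (hη : 1 < η) :
    ∃ C : ℝ, 0 < C ∧
      ∀ (A : Euc n → Euc n → Euc n), StructCond A p C₁ C₂ →
      ∀ (b : Euc n → ℝ), Measurable b → (∀ x, 0 ≤ b x) → LocBdd b →
      ∀ (q : Euc n → ℝ), Measurable q → (∀ x, 0 ≤ q x) → LocBdd q →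
      ∀ (g : ℝ → ℝ), ContinuousOn g (Set.Ici 0) → (∀ t ∈ Set.Ici (0 : ℝ), 0 ≤ g t) →
        (∀ t : ℝ, 0 < t → 0 < g t) →
      ∀ u : Euc n → ℝ, ContDiff ℝ 1 u → (∀ x, 0 ≤ u x) →
        IsWeakSol A b α (fun x => q x * g (u x)) Set.univ u →
      ∀ τ r₁ r₂ : ℝ, 1 < τ → 0 < r₁ → r₁ < r₂ → r₂ ≤ τ * r₁ →
        0 < sphMax u r₁ → sphMax u r₁ ≤ η ^ (-(1 / 2 : ℝ)) * sphMax u r₂ →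
        (C * ∫ ξ in Set.Ioc r₁ r₂, qinf q τ ξ ^ (1 / p)) ≤
            ∫ t in Set.Ioc (sphMax u r₁) (sphMax u r₂), (ginf g η t * t) ^ (-(1 / p)) ∨
          (C * ∫ ξ in Set.Ioc r₁ r₂, (ξ * fdef q b p α τ ξ) ^ (1 / (p - 1))) ≤
            ∫ t in Set.Ioc (sphMax u r₁) (sphMax u r₂), ginf g η t ^ (-(1 / α)) := by
  have hα : 0 < α := by linarith
  have : NeZero n := ⟨by lia⟩
  obtain ⟨L, hL, hLη, hLmul⟩ := exists_one_lt_pow_four_lt hη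
  obtain ⟨K, hK, hwidth⟩ :=
    exists_width_le_integral_growthWeight hn hp.le hα hα₁ hα₂ hC₁ hC₂ hL hLη
  refine ⟨1 / (2 * K), by positivity, fun A hA b hbm hb₀ hb q hqm hq₀ hq g hgc hg₀ hg u hu hu₀ hw
    τ r₁ r₂ hτ hr₁ hr hrτ hM₁ hM ↦ ?_⟩
  have hLM := hLmul hM₁ hM
  have hM₁₂ : sphMax u r₁ ≤ sphMax u r₂ := (le_mul_of_one_le_left hM₁.le hL.le).trans hLM
  have hsub := hw.isSubsolution hp.le hα.le hA hbm hb₀ hb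
    (hq.locallyIntegrable_mul hqm hq₀ (hgc.comp_continuous hu.continuous hu₀)) hu
  have hB₀ := driftSup_nonneg hp.le hα.le hb₀ hb hr₁.le hr
  have hg_Ioi := hgc.mono Ioi_subset_Ici_self
  refine dichotomy_of_le_add hK (by linarith) hα (sub_pos.2 hr)
    (essInf_Ann_nonneg hq₀ hq hr₁.le hr) hB₀
    (setIntegral_ginf_mul_rpow_nonneg hη hg hM₁)
    (setIntegral_qinf_rpow_le (by linarith) hq₀ hq hτ hr₁ hr hrτ)
    (setIntegral_mul_fdef_rpow_le hp hα hq₀ hq hb₀ hb hτ hr₁ hr hrτ) fun hQ ↦ ?_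
  rw [← integral_growthWeight hη (by linarith) hα.le hg_Ioi hg hM₁ hM₁₂]
  exact hwidth hsub (fun x ↦ mul_nonneg (hq₀ x) (hg₀ _ (hu₀ x))) hb hg_Ioi hg hr₁ hr hM₁ hLM
    hQ hB₀ (ae_essInf_Ann_le hq₀) (ae_le_driftSup hp hα hb₀ hb)
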